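/- arXiv:2511.04430 — 10 statements merged into one kernel-verified Lean document; each statement's English description precedes it below -/
import Mathlib

section
/- Let N be a positive integer and f, g ∈ R_N. The code BB_N(f,g) is topological if and only if for every prime p dividing N, the code BB_p(f_p, g_p) is topological, where f_p, g_p ∈ R_p are the coefficientwise reductions of f and g modulo p. -/
/-- The Laurent polynomial ring `(ZMod N)[X^{±1}, Y^{±1}]`. -/
abbrev RR (N : ℕ) : Type := AddMonoidAlgebra (ZMod N) (ℤ × ℤ)

/-- The code `BB_N(f,g)` is topological. -/
def IsTopological {N : ℕ} (f g : RR N) : Prop :=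
  ∀ r s : RR N, r * f + s * g = 0 → ∃ h : RR N, r = h * g ∧ s = -(h * f)

/-- Coefficientwise reduction `R_N → R_p` modulo a divisor `p` of `N`. -/
noncomputable def red (N p : ℕ) (h : p ∣ N) : RR N →+* RR p :=
  AddMonoidAlgebra.liftNCRingHom
    ((AddMonoidAlgebra.singleZeroRingHom).comp (ZMod.castHom h (ZMod p)))
    (AddMonoidAlgebra.of (ZMod p) (ℤ × ℤ))
    (fun _ _ => Commute.all _ _)

section Abstract

variable {A : Type*} [CommRing A]

/-- The code of `f` and `g` is topological modulo `d`, expressed by divisibility in the ring. -/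
def IsTopologicalMod (d f g : A) : Prop :=
  ∀ r s : A, d ∣ r * f + s * g → ∃ h : A, d ∣ r - h * g ∧ d ∣ s + h * f

/-- Factors of divisors of `N` can be cancelled in divisibility relations of `A`, as in `ℤ/N`. -/
def CancelsDivisors (A : Type*) [CommRing A] (N : ℕ) : Prop :=
  ∀ (d e : ℕ) (x : A), d * e ∣ N → (d * e : A) ∣ d * x → (e : A) ∣ x

theorem IsTopologicalMod.of_forall_prime {N : ℕ} (hN : N ≠ 0) (hC : CancelsDivisors A N)
    {f g : A} (hp : ∀ p : ℕ, p.Prime → p ∣ N → IsTopologicalMod (p : A) f g) (M : ℕ) (hM : M ∣ N) :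
    IsTopologicalMod (M : A) f g := by
  induction M using Nat.recOnMul with
  | zero => exact absurd (zero_dvd_iff.mp hM) hN
  | one => exact fun r s _ => ⟨0, by simp, by simp⟩
  | prime p hp' => exact hp p hp' hM
  | mul a b iha ihb =>
    intro r s hrs
    push_cast at hrs
    obtain ⟨h, ⟨r', hr⟩, ⟨s', hs⟩⟩ :=
      iha (dvd_of_mul_right_dvd hM) r s (dvd_of_mul_right_dvd hrs)
    have hb : (b : A) ∣ r' * f + s' * g := by
      refine hC a b _ hM ?_
      have : (a : A) * (r' * f + s' * g) = r * f + s * g := by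
        linear_combination (-f) * hr - g * hs
      rwa [this]
    obtain ⟨h', ⟨u, hu⟩, ⟨v, hv⟩⟩ := ihb (dvd_of_mul_left_dvd hM) r' s' hb
    refine ⟨h + a * h', ⟨u, ?_⟩, ⟨v, ?_⟩⟩ <;> push_cast
    · linear_combination hr + a * hu
    · linear_combination hs + a * hv

theorem dvd_of_dvd_mul_of_dvd_mul {N : ℕ} (hN : N ≠ 0) (hC : CancelsDivisors A N)
    (hprime : ∀ p : ℕ, p.Prime → p ∣ N → (Ideal.span {(p : A)}).IsPrime) {f g : A}
    (hfg : ∀ p : ℕ, p.Prime → p ∣ N → ¬((p : A) ∣ f ∧ (p : A) ∣ g)) (M : ℕ) (hM : M ∣ N) (h : A)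
    (hf : (M : A) ∣ h * f) (hg : (M : A) ∣ h * g) : (M : A) ∣ h := by
  induction M using Nat.recOnMul generalizing h with
  | zero => exact absurd (zero_dvd_iff.mp hM) hN
  | one => simp
  | prime p hp =>
    by_contra hh
    have hdvd : ∀ y : A, (p : A) ∣ h * y → (p : A) ∣ y := fun y hy => by
      simp only [← Ideal.mem_span_singleton] at hh hy ⊢
      exact ((hprime p hp hM).mem_or_mem hy).resolve_left hh
    exact hfg p hp hM ⟨hdvd f hf, hdvd g hg⟩
  | mul a b iha ihb =>
    push_cast at hf hg ⊢
    obtain ⟨k, rfl⟩ := iha (dvd_of_mul_right_dvd hM) h (dvd_of_mul_right_dvd hf)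
      (dvd_of_mul_right_dvd hg)
    rw [mul_assoc] at hf hg
    exact mul_dvd_mul_left _
      (ihb (dvd_of_mul_left_dvd hM) k (hC a b _ hM hf) (hC a b _ hM hg))

/-- If the syzygies of `f, g` are trivial, an element killed by `f` is divisible by every
power of `g`, with a quotient that is again killed by `f`. -/
theorem exists_eq_mul_pow_of_syzygies {f g : A}
    (htop : ∀ r s : A, r * f + s * g = 0 → ∃ h, r = h * g ∧ s = -(h * f)) {c : A}
    (hc : c * f = 0) (j : ℕ) : ∃ u, u * f = 0 ∧ c = u * g ^ j := by
  induction j with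
  | zero => exact ⟨c, hc, by simp⟩
  | succ j ih =>
    obtain ⟨u, hu, rfl⟩ := ih
    obtain ⟨v, rfl, hv⟩ := htop u 0 (by simpa using hu)
    exact ⟨v, neg_eq_zero.mp hv.symm, by ring⟩

theorem not_dvd_and_dvd_of_syzygies {N : ℕ} (hN : N ≠ 0) (hA : (N : A) = 0)
    (hC : CancelsDivisors A N) {f g : A}
    (htop : ∀ r s : A, r * f + s * g = 0 → ∃ h, r = h * g ∧ s = -(h * f))
    {p : ℕ} (hp : p.Prime) (hpN : p ∣ N) (hpA : ¬IsUnit (p : A)) :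
    ¬((p : A) ∣ f ∧ (p : A) ∣ g) := by
  rintro ⟨⟨f', rfl⟩, ⟨g', rfl⟩⟩
  obtain ⟨k, m, hm, rfl⟩ := Nat.exists_eq_pow_mul_and_not_dvd hN p hp.ne_one
  obtain _ | k := k
  · exact hm (by simpa using hpN)
  push_cast at hA
  obtain ⟨u, -, hu⟩ := exists_eq_mul_pow_of_syzygies htop (c := (p ^ k * m : A))
    (by linear_combination f' * hA) (k + 1)
  have hpm : (p : A) ∣ m := by
    refine hC (p ^ k) p m ⟨m, by ring⟩ ?_
    push_cast
    exact ⟨u * g' ^ (k + 1), by rw [hu]; ring⟩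
  have hcop : IsCoprime (p : A) (m : A) := by
    simpa using (Nat.isCoprime_iff_coprime.mpr ((Nat.Prime.coprime_iff_not_dvd hp).mpr hm)).map
      (Int.castRingHom A)
  exact hpA (hcop.isUnit_of_dvd' dvd_rfl hpm)

theorem IsTopologicalMod.of_syzygies {N : ℕ} (hN : N ≠ 0) (hA : (N : A) = 0)
    (hC : CancelsDivisors A N) (hprime : ∀ p : ℕ, p.Prime → p ∣ N → (Ideal.span {(p : A)}).IsPrime) {f g : A}
    (htop : ∀ r s : A, r * f + s * g = 0 → ∃ h, r = h * g ∧ s = -(h * f))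
    {p : ℕ} (hpN : p ∣ N) : IsTopologicalMod (p : A) f g := by
  rintro r s ⟨t, ht⟩
  obtain ⟨M, rfl⟩ := hpN
  push_cast at hA
  obtain ⟨h, hr, hs⟩ := htop (M * r) (M * s) (by linear_combination M * ht + t * hA)
  obtain ⟨k, rfl⟩ := dvd_of_dvd_mul_of_dvd_mul hN hC hprime
    (fun q hq hqN => not_dvd_and_dvd_of_syzygies hN (by exact_mod_cast hA) hC htop hq hqN
      (mt Ideal.span_singleton_eq_top.mpr (hprime q hq hqN).ne_top)) M (dvd_mul_left M p) h ⟨-s, by linear_combination hs⟩ ⟨r, hr.symm⟩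
  refine ⟨k, hC M p _ (by rw [mul_comm]) ⟨0, ?_⟩, hC M p _ (by rw [mul_comm]) ⟨0, ?_⟩⟩
  · linear_combination hr
  · linear_combination hs

end Abstract

theorem ZMod.castHom_eq_zero_iff_dvd {N d : ℕ} (h : d ∣ N) (x : ZMod N) :
    ZMod.castHom h (ZMod d) x = 0 ↔ (d : ZMod N) ∣ x := by
  constructor
  · obtain ⟨a, rfl⟩ := ZMod.intCast_surjective x
    rw [map_intCast, ZMod.intCast_zmod_eq_zero_iff_dvd]
    rintro ⟨b, rfl⟩
    exact ⟨b, by push_cast; rfl⟩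
  · rintro ⟨y, rfl⟩
    rw [map_mul, map_natCast, ZMod.natCast_self, zero_mul]

theorem ZMod.cancelsDivisors {N : ℕ} (hN : N ≠ 0) : CancelsDivisors (ZMod N) N := by
  intro d e x hde hx
  obtain ⟨a, rfl⟩ := ZMod.intCast_surjective x
  have hd : (d : ℤ) ≠ 0 := by
    rw [Nat.cast_ne_zero]
    exact ne_zero_of_dvd_ne_zero hN (dvd_of_mul_right_dvd hde)
  rw [← Nat.cast_mul, ← ZMod.castHom_eq_zero_iff_dvd hde, map_mul, map_natCast, map_intCast,
    ← Int.cast_natCast, ← Int.cast_mul, ZMod.intCast_zmod_eq_zero_iff_dvd, Nat.cast_mul,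
    mul_dvd_mul_iff_left hd] at hx
  rwa [← ZMod.castHom_eq_zero_iff_dvd (dvd_of_mul_left_dvd hde), map_intCast,
    ZMod.intCast_zmod_eq_zero_iff_dvd]

theorem AddMonoidAlgebra.natCast_dvd_iff {R M : Type*} [CommRing R] [AddCommMonoid M] (d : ℕ)
    (x : AddMonoidAlgebra R M) :
    (d : AddMonoidAlgebra R M) ∣ x ↔ ∀ m, (d : R) ∣ x.coeff m := by
  constructor
  · rintro ⟨y, rfl⟩ m
    rw [← nsmul_eq_mul, AddMonoidAlgebra.coeff_smul_apply, nsmul_eq_mul]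
    exact dvd_mul_right _ _
  · intro h
    rw [← AddMonoidAlgebra.sum_coeff_single x]
    refine Finset.dvd_sum fun m _ => ?_
    obtain ⟨c, hc⟩ := h m
    exact ⟨AddMonoidAlgebra.single m c, by
      rw [hc, ← nsmul_eq_mul, ← nsmul_eq_mul, AddMonoidAlgebra.smul_single]⟩

theorem RR.cancelsDivisors {N : ℕ} (hN : N ≠ 0) : CancelsDivisors (RR N) N := by
  intro d e x hde hx
  rw [← Nat.cast_mul, AddMonoidAlgebra.natCast_dvd_iff] at hx
  rw [AddMonoidAlgebra.natCast_dvd_iff]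
  intro m
  refine ZMod.cancelsDivisors hN d e _ hde ?_
  simpa only [← nsmul_eq_mul, AddMonoidAlgebra.coeff_smul_apply, Nat.cast_mul] using hx m

theorem red_eq_mapRingHom {N p : ℕ} (h : p ∣ N) :
    red N p h = AddMonoidAlgebra.mapRingHom (ℤ × ℤ) (ZMod.castHom h (ZMod p)) := by
  ext <;> simp [red]

theorem red_eq_zero_iff {N p : ℕ} (h : p ∣ N) (x : RR N) :
    red N p h x = 0 ↔ (p : RR N) ∣ x := by
  simp only [AddMonoidAlgebra.natCast_dvd_iff, ← ZMod.castHom_eq_zero_iff_dvd h,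
    red_eq_mapRingHom, ← AddMonoidAlgebra.coeff_mapRingHom]
  rw [← AddMonoidAlgebra.coeff_eq_zero, Finsupp.ext_iff]
  rfl

theorem red_surjective {N p : ℕ} (h : p ∣ N) : Function.Surjective (red N p h) := by
  intro y
  rw [← AddMonoidAlgebra.sum_coeff_single y]
  refine sum_mem (S := (red N p h).range) fun m _ => ?_
  obtain ⟨c, hc⟩ := ZMod.castHom_surjective h (y.coeff m)
  exact ⟨AddMonoidAlgebra.single m c, by simp [red_eq_mapRingHom, ← hc]⟩

theorem RR.isPrime_span_natCast {N p : ℕ} (hp : p.Prime) (h : p ∣ N) :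
    (Ideal.span {(p : RR N)}).IsPrime := by
  have : Fact p.Prime := ⟨hp⟩
  have hker : Ideal.span {(p : RR N)} = RingHom.ker (red N p h) := by
    ext x
    rw [Ideal.mem_span_singleton, RingHom.mem_ker, red_eq_zero_iff]
  rw [hker]
  exact RingHom.ker_isPrime _

theorem isTopological_red_iff {N p : ℕ} (h : p ∣ N) (f g : RR N) :
    IsTopological (red N p h f) (red N p h g) ↔ IsTopologicalMod (p : RR N) f g := by
  simp only [IsTopological, IsTopologicalMod, (red_surjective h).forall, (red_surjective h).exists,
    ← red_eq_zero_iff h, map_add, map_sub, map_mul, sub_eq_zero, add_eq_zero_iff_eq_neg]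

theorem stmt0 (N : ℕ) (hN : 0 < N) (f g : RR N) :
    IsTopological f g ↔
      ∀ (p : ℕ) (hp : p.Prime) (hpN : p ∣ N),
        IsTopological (red N p hpN f) (red N p hpN g) := by
  have hA : (N : RR N) = 0 := by
    rw [← map_natCast (algebraMap (ZMod N) (RR N)), ZMod.natCast_self, map_zero]
  simp only [isTopological_red_iff]
  constructor
  · intro htop p _ hpN
    exact .of_syzygies hN.ne' hA (RR.cancelsDivisors hN.ne')
      (fun q hq hqN => RR.isPrime_span_natCast hq hqN) htop hpN
  · intro hp
    have := IsTopologicalMod.of_forall_prime hN.ne' (RR.cancelsDivisors hN.ne') hp N dvd_rfl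
    simpa only [IsTopologicalMod, IsTopological, hA, zero_dvd_iff, sub_eq_zero,
      add_eq_zero_iff_eq_neg] using this
end

section
/- Let N be a positive integer and f, g ∈ R_N. The code BB_N(f,g) is topological if and only if the quotient ring R_N ⧸ Ideal.span {f, g} is a finite set. -/
open Polynomial nonZeroDivisors

/-- Every syzygy of `(f, g)` is a multiple of the Koszul syzygy `(g, -f)`. -/
def KoszulExact {A : Type*} [CommRing A] (f g : A) : Prop :=
  ∀ r s : A, r * f + s * g = 0 → ∃ h : A, r = h * g ∧ s = -(h * f)

section CommRing

variable {A B : Type*} [CommRing A] [CommRing B]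

theorem KoszulExact.map_ringEquiv {f g : A} (h : KoszulExact f g) (e : A ≃+* B) :
    KoszulExact (e f) (e g) := by
  intro r s hrs
  obtain ⟨k, hr, hs⟩ := h (e.symm r) (e.symm s) (e.injective (by simpa using hrs))
  exact ⟨e k, by simpa using congrArg e hr, by simpa using congrArg e hs⟩

theorem KoszulExact.of_ringEquiv {f g : A} (e : A ≃+* B) (h : KoszulExact (e f) (e g)) :
    KoszulExact f g := by
  simpa using h.map_ringEquiv e.symm

theorem mem_span_pair_of_ringEquiv {f g x : A} (e : A ≃+* B)
    (h : e x ∈ Ideal.span {e f, e g}) : x ∈ Ideal.span {f, g} := by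
  obtain ⟨u, v, huv⟩ := Ideal.mem_span_pair.1 h
  refine Ideal.mem_span_pair.2 ⟨e.symm u, e.symm v, e.injective ?_⟩
  simpa using huv

/-- If the ideal `(f, g)` contains a regular sequence `a, b`, then the Koszul complex of `f, g`
is exact. -/
theorem koszulExact_of_regular {f g a b : A} (ha : a ∈ Ideal.span {f, g})
    (hb : b ∈ Ideal.span {f, g}) (ha0 : a ∈ A⁰) (hab : ∀ h, a ∣ b * h → a ∣ h) :
    KoszulExact f g := by
  intro r s hrs
  obtain ⟨u, v, rfl⟩ := Ideal.mem_span_pair.1 ha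
  obtain ⟨u', v', rfl⟩ := Ideal.mem_span_pair.1 hb
  have hr : (u * f + v * g) * r = g * (v * r - u * s) := by linear_combination u * hrs
  have hs : (u * f + v * g) * s = -(f * (v * r - u * s)) := by linear_combination v * hrs
  obtain ⟨h, hh⟩ := hab (v * r - u * s) ⟨v' * r - u' * s, by
    linear_combination u' * hs - v' * hr⟩
  refine ⟨h, ?_, ?_⟩
  · refine (mul_cancel_left_mem_nonZeroDivisors ha0).1 ?_
    rw [hr, hh]; ring
  · refine (mul_cancel_left_mem_nonZeroDivisors ha0).1 ?_
    rw [hs, hh]; ring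

theorem KoszulExact.eq_zero_of_mul_eq_zero [IsNoetherianRing A] {f g u : A}
    (h : KoszulExact f g) (hf : u * f = 0) (hg : u * g = 0) : u = 0 := by
  let W : Ideal A := LinearMap.ker (LinearMap.mulRight A f)
  have hW : ∀ w, w ∈ W ↔ w * f = 0 := fun w => by simp [W]
  obtain ⟨r, hr, hr0⟩ := Submodule.exists_sub_one_mem_and_smul_eq_zero_of_fg_of_le_smul
    (Ideal.span {g}) W (IsNoetherian.noetherian W) (by
      intro w hw
      obtain ⟨k, hk, hk0⟩ := h w 0 (by simpa using (hW w).1 hw)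
      have hkW : k ∈ W := (hW k).2 (by simpa using hk0.symm)
      rw [hk, mul_comm]
      exact Submodule.smul_mem_smul (Ideal.mem_span_singleton_self g) hkW)
  obtain ⟨t, ht⟩ := Ideal.mem_span_singleton'.1 hr
  have := hr0 u ((hW u).2 hf)
  rw [smul_eq_mul] at this
  linear_combination this + u * ht - t * hg

/-- Exactness descends along a surjection `φ` whose kernel is the annihilator of `m`, provided the
annihilator of `p` is generated by `m`. -/
theorem KoszulExact.map_of_surjective [IsNoetherianRing A] {f g p m : A} (h : KoszulExact f g)
    {φ : A →+* B} (hφ : Function.Surjective φ) (hker : ∀ x, φ x = 0 ↔ m * x = 0)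
    (hpm : p * m = 0) (hp : ∀ x, p * x = 0 → m ∣ x) : KoszulExact (φ f) (φ g) := by
  intro r s hrs
  obtain ⟨r, rfl⟩ := hφ r
  obtain ⟨s, rfl⟩ := hφ s
  obtain ⟨k, hr, hs⟩ := h (m * r) (m * s) (by
    rw [← map_mul, ← map_mul, ← map_add, hker] at hrs
    linear_combination hrs)
  obtain ⟨k, rfl⟩ := hp k (h.eq_zero_of_mul_eq_zero
    (by linear_combination p * hs - s * hpm) (by linear_combination r * hpm - p * hr))
  refine ⟨φ k, ?_, ?_⟩
  · rw [← sub_eq_zero, ← map_mul, ← map_sub, hker]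
    linear_combination hr
  · rw [← sub_eq_zero, ← map_mul, ← map_neg, ← map_sub, hker]
    linear_combination hs

/-- If `N = 0` in a Noetherian ring, finiteness of a quotient may be checked modulo the primes
dividing `N`. -/
theorem finite_quotient_of_forall_prime [IsNoetherianRing A] {N : ℕ} (hN : N ≠ 0)
    (hN0 : (N : A) = 0) (I : Ideal A)
    (h : ∀ p : ℕ, p.Prime → p ∣ N → Finite (A ⧸ I ⊔ Ideal.span {(p : A)})) : Finite (A ⧸ I) := by
  suffices ∀ M : ℕ, M ≠ 0 → M ∣ N → Finite (A ⧸ I ⊔ Ideal.span {(M : A)}) by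
    simpa [hN0] using this N hN dvd_rfl
  intro M
  induction M using induction_on_primes with
  | zero => simp
  | one =>
    intro _ _
    have : I ⊔ Ideal.span {((1 : ℕ) : A)} = ⊤ := by simp
    rw [this]
    infer_instance
  | prime_mul p M hp ih =>
    intro h0 hd
    have := h p hp ((dvd_mul_right p M).trans hd)
    have := ih (right_ne_zero_of_mul h0) ((dvd_mul_left M p).trans hd)
    have hle : (I ⊔ Ideal.span {(p : A)}) * (I ⊔ Ideal.span {(M : A)}) ≤
        I ⊔ Ideal.span {((p * M : ℕ) : A)} := by
      rw [Ideal.sup_mul, Ideal.mul_sup (Ideal.span _), Ideal.span_singleton_mul_span_singleton,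
        Nat.cast_mul]
      exact sup_le (Ideal.mul_le_left.trans le_sup_left)
        (sup_le_sup_right Ideal.mul_le_right _)
    have : Finite (A ⧸ (I ⊔ Ideal.span {(p : A)}) * (I ⊔ Ideal.span {(M : A)})) :=
      Submodule.finite_quotient_smul _ (IsNoetherian.noetherian _)
    exact Finite.of_surjective _ (Ideal.Quotient.factor_surjective hle)

end CommRing

section Laurent

open LaurentPolynomial

theorem LaurentPolynomial.T_sub_one_mem_nonZeroDivisors {A : Type*} [CommRing A] {n : ℕ}
    (hn : n ≠ 0) : (T n - 1 : A[T;T⁻¹]) ∈ A[T;T⁻¹]⁰ := by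
  have h := (monic_X_pow_sub_C (1 : A) hn).mem_nonZeroDivisors
  have := IsLocalization.map_nonZeroDivisors_le (Submonoid.powers (X : A[X])) A[T;T⁻¹]
    (Submonoid.mem_map_of_mem _ h)
  simpa [algebraMap_eq_toLaurent] using this

theorem LaurentPolynomial.T_sub_one_dvd_of_dvd_C_mul {A : Type*} [CommRing A] {n : ℕ}
    (hn : n ≠ 0) {b : A} (hb : b ∈ A⁰) (h : A[T;T⁻¹])
    (hd : (T n - 1 : A[T;T⁻¹]) ∣ LaurentPolynomial.C b * h) : (T n - 1 : A[T;T⁻¹]) ∣ h := by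
  have hq := monic_X_pow_sub_C (1 : A) hn
  obtain ⟨k, hk⟩ := hd
  obtain ⟨i, h', hh'⟩ := exists_T_pow h
  obtain ⟨j, k', hk'⟩ := exists_T_pow k
  have key : Polynomial.C b * (h' * X ^ j) = (X ^ n - Polynomial.C 1) * (k' * X ^ i) := by
    apply Polynomial.toLaurent_injective
    simp only [map_mul, map_sub, Polynomial.toLaurent_C, Polynomial.toLaurent_X_pow, hh', hk',
      map_one]
    linear_combination (T i * T j) * hk
  have hmod : b • ((h' * X ^ j) %ₘ (X ^ n - Polynomial.C 1)) = 0 := by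
    rw [← smul_modByMonic, Polynomial.smul_eq_C_mul, key, (modByMonic_eq_zero_iff_dvd hq)]
    exact dvd_mul_right _ _
  have hzero : (h' * X ^ j) %ₘ (X ^ n - Polynomial.C 1) = 0 := by
    ext m
    have := congrArg (fun p : A[X] => p.coeff m) hmod
    simp only [Polynomial.coeff_smul, smul_eq_mul, Polynomial.coeff_zero] at this
    exact (mul_left_mem_nonZeroDivisors_eq_zero_iff hb).1 this
  obtain ⟨l, hl⟩ := (modByMonic_eq_zero_iff_dvd hq).1 hzero
  have hl' := congrArg Polynomial.toLaurent hl
  simp only [map_mul, map_sub, Polynomial.toLaurent_X_pow, hh', map_one] at hl'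
  have hu : IsUnit (T i * T j : A[T;T⁻¹]) := (isUnit_T _).mul (isUnit_T _)
  rw [← hu.dvd_mul_right, ← mul_assoc, hl']
  exact dvd_mul_right _ _

/-- A greatest common divisor over the fraction field, with denominators cleared. -/
theorem Polynomial.exists_C_mul_bezout {D : Type*} [CommRing D] [IsDomain D] (f g : D[X]) :
    ∃ c : D, c ≠ 0 ∧ ∃ d f' g' u v : D[X], Polynomial.C c * f = d * f' ∧
      Polynomial.C c * g = d * g' ∧ Polynomial.C c * d = u * f + v * g := by
  classical
  let F := FractionRing D
  let φ : D[X] →+* F[X] := mapRingHom (algebraMap D F)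
  have hφ : Function.Injective φ := map_injective _ (IsFractionRing.injective D F)
  have lift : ∀ q : F[X], ∃ b : D, b ≠ 0 ∧ ∃ q' : D[X], φ q' = φ (Polynomial.C b) * q := by
    intro q
    obtain ⟨b, hb, h⟩ := IsLocalization.integerNormalization_spec D⁰ q
    refine ⟨b, nonZeroDivisors.ne_zero hb, _, h.trans ?_⟩
    simp [φ, Algebra.smul_def]
  obtain ⟨f₁, hf₁⟩ := EuclideanDomain.gcd_dvd_left (φ f) (φ g)
  obtain ⟨g₁, hg₁⟩ := EuclideanDomain.gcd_dvd_right (φ f) (φ g)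
  have hd₁ := EuclideanDomain.gcd_eq_gcd_ab (φ f) (φ g)
  set d₁ := EuclideanDomain.gcd (φ f) (φ g)
  obtain ⟨a, ha, d, hd⟩ := lift d₁
  obtain ⟨b₁, hb₁, f', hf'⟩ := lift f₁
  obtain ⟨b₂, hb₂, g', hg'⟩ := lift g₁
  obtain ⟨b₃, hb₃, u, hu⟩ := lift (EuclideanDomain.gcdA (φ f) (φ g))
  obtain ⟨b₄, hb₄, v, hv⟩ := lift (EuclideanDomain.gcdB (φ f) (φ g))
  refine ⟨a * b₁ * b₂ * b₃ * b₄, by simp [*], d, Polynomial.C (b₂ * b₃ * b₄) * f',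
    Polynomial.C (b₁ * b₃ * b₄) * g', Polynomial.C (a * a * b₁ * b₂ * b₄) * u,
    Polynomial.C (a * a * b₁ * b₂ * b₃) * v, hφ ?_, hφ ?_, hφ ?_⟩
  · simp only [map_mul, hd, hf']
    linear_combination (φ (Polynomial.C a) * φ (Polynomial.C b₁) * φ (Polynomial.C b₂) *
      φ (Polynomial.C b₃) * φ (Polynomial.C b₄)) * hf₁
  · simp only [map_mul, hd, hg']
    linear_combination (φ (Polynomial.C a) * φ (Polynomial.C b₁) * φ (Polynomial.C b₂) *
      φ (Polynomial.C b₃) * φ (Polynomial.C b₄)) * hg₁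
  · simp only [map_mul, map_add, hd, hu, hv]
    linear_combination (φ (Polynomial.C a) * φ (Polynomial.C a) * φ (Polynomial.C b₁) *
      φ (Polynomial.C b₂) * φ (Polynomial.C b₃) * φ (Polynomial.C b₄)) * hd₁

theorem KoszulExact.exists_C_mem_span {D : Type*} [CommRing D] [IsDomain D] {f g : D[T;T⁻¹]}
    (h : KoszulExact f g) : ∃ c : D, c ≠ 0 ∧ LaurentPolynomial.C c ∈ Ideal.span {f, g} := by
  obtain ⟨i, f₀, hf₀⟩ := exists_T_pow f
  obtain ⟨j, g₀, hg₀⟩ := exists_T_pow g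
  obtain ⟨c, hc, d, f', g', u, v, hf, hg, hd⟩ := Polynomial.exists_C_mul_bezout f₀ g₀
  replace hf := congrArg Polynomial.toLaurent hf
  replace hg := congrArg Polynomial.toLaurent hg
  replace hd := congrArg Polynomial.toLaurent hd
  simp only [map_mul, map_add, Polynomial.toLaurent_C, hf₀, hg₀] at hf hg hd
  generalize Polynomial.toLaurent d = d at *
  generalize Polynomial.toLaurent f' = f' at *
  generalize Polynomial.toLaurent g' = g' at *
  have hTi : (T i : D[T;T⁻¹]) * T (-i) = 1 := by rw [← T_add]; simp
  have hTj : (T j : D[T;T⁻¹]) * T (-j) = 1 := by rw [← T_add]; simp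
  have hC : (LaurentPolynomial.C c : D[T;T⁻¹]) ≠ 0 := by
    rw [← Polynomial.toLaurent_C, Polynomial.toLaurent_ne_zero]
    simpa using hc
  obtain ⟨k, hk₁, hk₂⟩ := h (g' * T (-j)) (-(f' * T (-i))) (mul_left_cancel₀ hC (by
    linear_combination (g' * T (-j) * T (-i)) * hf - (f' * T (-i) * T (-j)) * hg
      - (LaurentPolynomial.C c * g' * T (-j) * f) * hTi
      + (LaurentPolynomial.C c * f' * T (-i) * g) * hTj))
  have hcd : LaurentPolynomial.C c = d * k := by
    have hne : f ≠ 0 ∨ g ≠ 0 := by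
      by_contra! h0
      obtain ⟨rfl, rfl⟩ := h0
      obtain ⟨l, hl, -⟩ := h 1 0 (by simp)
      simp at hl
    rcases hne with hne | hne
    · refine mul_right_cancel₀ hne ?_
      linear_combination T (-i) * hf - d * hk₂ - (LaurentPolynomial.C c * f) * hTi
    · refine mul_right_cancel₀ hne ?_
      linear_combination T (-j) * hg + d * hk₁ - (LaurentPolynomial.C c * g) * hTj
  refine ⟨c * c, mul_ne_zero hc hc, Ideal.mem_span_pair.2
    ⟨k * u.toLaurent * T i, k * v.toLaurent * T j, ?_⟩⟩
  rw [map_mul]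
  linear_combination (-k) * hd - LaurentPolynomial.C c * hcd

theorem LaurentPolynomial.exists_dvd_T_sub_one {K : Type*} [Field K] [Finite K] {c : K[T;T⁻¹]}
    (hc : c ≠ 0) : ∃ n : ℕ, n ≠ 0 ∧ c ∣ T n - 1 := by
  obtain ⟨k, q, hq⟩ := exists_T_pow c
  have hq0 : q ≠ 0 := by
    rintro rfl
    exact hc ((isUnit_T (R := K) k).mul_left_eq_zero.1 (by simpa using hq.symm))
  have := (AdjoinRoot.powerBasis hq0).finite
  have : Finite (AdjoinRoot q) := Module.finite_of_finite K
  obtain ⟨i, j, hij, h⟩ := Finite.exists_ne_map_eq_of_infinite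
    fun i : ℕ => AdjoinRoot.mk q (X ^ i)
  wlog hlt : i < j generalizing i j
  · exact this j i hij.symm h.symm (by omega)
  obtain ⟨l, hl⟩ := AdjoinRoot.mk_eq_mk.1 h.symm
  obtain ⟨m, rfl⟩ := Nat.exists_eq_add_of_lt hlt
  refine ⟨m + 1, by omega, (isUnit_T (i : ℤ)).dvd_mul_left.1
    ⟨T k * l.toLaurent, ?_⟩⟩
  have := congrArg Polynomial.toLaurent hl
  simp only [map_sub, map_mul, Polynomial.toLaurent_X_pow, hq] at this
  rw [← mul_assoc, ← this, mul_sub, ← T_add, mul_one, add_assoc, Nat.cast_add i]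

end Laurent

section ZModLaurent

open AddMonoidAlgebra

theorem ZMod.castHom_eq_zero_iff_mul {p m : ℕ} (hm : m ≠ 0) (a : ZMod (p * m)) :
    ZMod.castHom (dvd_mul_right p m) (ZMod p) a = 0 ↔ (m : ZMod (p * m)) * a = 0 := by
  obtain ⟨a, rfl⟩ := ZMod.intCast_surjective a
  rw [map_intCast, ZMod.intCast_zmod_eq_zero_iff_dvd, ← Int.cast_natCast (R := ZMod (p * m)),
    ← Int.cast_mul, ZMod.intCast_zmod_eq_zero_iff_dvd, Nat.cast_mul, mul_comm (p : ℤ),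
    mul_dvd_mul_iff_left (by exact_mod_cast hm)]

theorem ZMod.natCast_dvd_of_mul_eq_zero {p m : ℕ} (hp : p ≠ 0) {a : ZMod (p * m)}
    (h : (p : ZMod (p * m)) * a = 0) : (m : ZMod (p * m)) ∣ a := by
  obtain ⟨a, rfl⟩ := ZMod.intCast_surjective a
  rw [← Int.cast_natCast, ← Int.cast_mul, ZMod.intCast_zmod_eq_zero_iff_dvd, Nat.cast_mul,
    mul_dvd_mul_iff_left (by exact_mod_cast hp)] at h
  simpa using map_dvd (Int.castRingHom (ZMod (p * m))) h

theorem ZMod.natCast_dvd_of_castHom_eq_zero {p m : ℕ} {a : ZMod (p * m)}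
    (h : ZMod.castHom (dvd_mul_right p m) (ZMod p) a = 0) : (p : ZMod (p * m)) ∣ a := by
  obtain ⟨a, rfl⟩ := ZMod.intCast_surjective a
  rw [map_intCast, ZMod.intCast_zmod_eq_zero_iff_dvd] at h
  simpa using map_dvd (Int.castRingHom (ZMod (p * m))) h

variable {K G : Type*} [CommRing K] [AddCommMonoid G]

theorem AddMonoidAlgebra.coeff_natCast_mul_apply (k : ℕ) (x : AddMonoidAlgebra K G) (m : G) :
    ((k : AddMonoidAlgebra K G) * x).coeff m = k * x.coeff m := by
  rw [← nsmul_eq_mul, coeff_smul_apply, nsmul_eq_mul]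

theorem AddMonoidAlgebra.natCast_dvd_of_forall_coeff {k : ℕ} {x : AddMonoidAlgebra K G}
    (h : ∀ m, (k : K) ∣ x.coeff m) : (k : AddMonoidAlgebra K G) ∣ x := by
  classical
  choose c hc using h
  refine ⟨∑ m ∈ x.coeff.support, single m (c m), ?_⟩
  ext m
  rw [coeff_natCast_mul_apply, coeff_sum, Finsupp.finsetSum_apply]
  by_cases hm : x.coeff m = 0
  · simp [coeff_single, Finsupp.single_apply, hm]
  · simp [coeff_single, Finsupp.single_apply, hm, ← hc]

/-- Reduction of Laurent polynomials modulo a divisor of the modulus. -/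
noncomputable def laurentReduction (p m : ℕ) : RR (p * m) →+* RR p :=
  mapRingHom (ℤ × ℤ) (ZMod.castHom (dvd_mul_right p m) (ZMod p))

theorem laurentReduction_surjective (p m : ℕ) : Function.Surjective (laurentReduction p m) := by
  intro y
  induction y using AddMonoidAlgebra.induction_linear with
  | zero => exact ⟨0, map_zero _⟩
  | add x y hx hy =>
    obtain ⟨x, rfl⟩ := hx
    obtain ⟨y, rfl⟩ := hy
    exact ⟨x + y, map_add _ _ _⟩
  | single a b =>
    obtain ⟨b, rfl⟩ := ZMod.castHom_surjective (dvd_mul_right p m) b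
    exact ⟨single a b, mapRingHom_single _ _ _⟩

theorem laurentReduction_eq_zero_iff {p m : ℕ} (hm : m ≠ 0) (x : RR (p * m)) :
    laurentReduction p m x = 0 ↔ (m : RR (p * m)) * x = 0 := by
  simp only [AddMonoidAlgebra.ext_iff, Finsupp.ext_iff, coeff_natCast_mul_apply, laurentReduction,
    coeff_mapRingHom, AddMonoidAlgebra.coeff_zero, Finsupp.coe_zero, Pi.zero_apply,
    ZMod.castHom_eq_zero_iff_mul hm]

theorem natCast_dvd_of_laurentReduction_eq_zero {p m : ℕ} {x : RR (p * m)}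
    (hx : laurentReduction p m x = 0) : (p : RR (p * m)) ∣ x :=
  natCast_dvd_of_forall_coeff fun a => ZMod.natCast_dvd_of_castHom_eq_zero (by
    rw [← coeff_mapRingHom]
    exact congrArg (fun y : RR p => y.coeff a) hx)

instance isNoetherianRing_RR (N : ℕ) : IsNoetherianRing (RR N) :=
  have : IsNoetherianRing (ZMod N) :=
    isNoetherianRing_of_surjective ℤ _ (Int.castRingHom _) ZMod.intCast_surjective
  Algebra.FiniteType.isNoetherianRing (ZMod N) (RR N)

theorem natCast_self_RR (N : ℕ) : (N : RR N) = 0 := by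
  rw [← map_natCast (algebraMap (ZMod N) (RR N)), ZMod.natCast_self, map_zero]

theorem KoszulExact.laurentReduction {p m : ℕ} (hp : p ≠ 0) (hm : m ≠ 0) {f g : RR (p * m)}
    (h : KoszulExact f g) : KoszulExact (laurentReduction p m f) (laurentReduction p m g) := by
  refine h.map_of_surjective (p := (p : RR (p * m))) (laurentReduction_surjective p m)
    (laurentReduction_eq_zero_iff hm) ?_ ?_
  · rw [← Nat.cast_mul, natCast_self_RR]
  · intro x hx
    refine natCast_dvd_of_forall_coeff fun a => ZMod.natCast_dvd_of_mul_eq_zero hp ?_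
    rw [← coeff_natCast_mul_apply, hx]
    rfl

/-- The first exponent of a two-variable Laurent polynomial becomes the outer variable. -/
noncomputable def laurentCurry (N : ℕ) :
    RR N ≃+* LaurentPolynomial (LaurentPolynomial (ZMod N)) :=
  AddMonoidAlgebra.curryRingEquiv

theorem laurentCurry_single_left (N : ℕ) (n : ℤ) :
    laurentCurry N (single (n, 0) 1) = LaurentPolynomial.T n :=
  AddMonoidAlgebra.curryRingEquiv_single _ _ _

theorem laurentCurry_single_right (N : ℕ) (n : ℤ) :
    laurentCurry N (single (0, n) 1) = LaurentPolynomial.C (LaurentPolynomial.T n) :=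
  AddMonoidAlgebra.curryRingEquiv_single _ _ _

/-- Exchange of the two variables. -/
noncomputable def laurentSwap (N : ℕ) : RR N ≃+* RR N :=
  (AddMonoidAlgebra.domCongr (ZMod N) (ZMod N) (AddEquiv.prodComm (M := ℤ) (N := ℤ))).toRingEquiv

theorem laurentSwap_single (N : ℕ) (m n : ℤ) (a : ZMod N) :
    laurentSwap N (single (m, n) a) = single (n, m) a := by
  simp [laurentSwap]

theorem KoszulExact.exists_single_right_sub_one_mem {p : ℕ} [Fact p.Prime] {f g : RR p}
    (h : KoszulExact f g) :
    ∃ n : ℕ, n ≠ 0 ∧ single ((0 : ℤ), (n : ℤ)) 1 - 1 ∈ Ideal.span {f, g} := by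
  obtain ⟨c, hc, hmem⟩ := (h.map_ringEquiv (laurentCurry p)).exists_C_mem_span
  obtain ⟨n, hn, d, hd⟩ := LaurentPolynomial.exists_dvd_T_sub_one hc
  refine ⟨n, hn, mem_span_pair_of_ringEquiv (laurentCurry p) ?_⟩
  rw [map_sub, laurentCurry_single_right, map_one, ← map_one LaurentPolynomial.C, ← map_sub, hd,
    map_mul]
  exact Ideal.mul_mem_right _ _ hmem

theorem KoszulExact.exists_single_left_sub_one_mem {p : ℕ} [Fact p.Prime] {f g : RR p}
    (h : KoszulExact f g) :
    ∃ n : ℕ, n ≠ 0 ∧ single ((n : ℤ), (0 : ℤ)) 1 - 1 ∈ Ideal.span {f, g} := by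
  obtain ⟨n, hn, hmem⟩ := (h.map_ringEquiv (laurentSwap p)).exists_single_right_sub_one_mem
  refine ⟨n, hn, mem_span_pair_of_ringEquiv (laurentSwap p) ?_⟩
  rwa [map_sub, laurentSwap_single, map_one]

/-- A quotient in which both variables have finite order is finite. -/
theorem finite_quotient_of_single_sub_one_mem {N : ℕ} [NeZero N] {I : Ideal (RR N)} {m n : ℕ}
    (hm : m ≠ 0) (hn : n ≠ 0) (hX : single ((m : ℤ), (0 : ℤ)) 1 - 1 ∈ I)
    (hY : single ((0 : ℤ), (n : ℤ)) 1 - 1 ∈ I) : Finite (RR N ⧸ I) := by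
  let φ : Multiplicative (ℤ × ℤ) →* RR N ⧸ I :=
    (Ideal.Quotient.mk I : RR N →* RR N ⧸ I).comp (AddMonoidAlgebra.of (ZMod N) (ℤ × ℤ))
  have hφ : ∀ x, φ x = Ideal.Quotient.mk I (single x.toAdd 1) := fun x => rfl
  have hφX : φ (.ofAdd ((m : ℤ), 0)) = 1 := by
    rw [hφ, ← map_one (Ideal.Quotient.mk I), Ideal.Quotient.eq]
    exact hX
  have hφY : φ (.ofAdd (0, (n : ℤ))) = 1 := by
    rw [hφ, ← map_one (Ideal.Quotient.mk I), Ideal.Quotient.eq]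
    exact hY
  have hmod : ∀ a b : ℤ, φ (.ofAdd (a, b)) = φ (.ofAdd (a % m, b % n)) := by
    intro a b
    have hab : Multiplicative.ofAdd (a, b) = .ofAdd (a % m, b % n) *
        (.ofAdd ((m : ℤ), 0) ^ (a / m) * .ofAdd (0, (n : ℤ)) ^ (b / n)) := by
      simp only [← ofAdd_zsmul, ← ofAdd_add]
      congr 1
      ext
      · simp [mul_comm (a / m), Int.emod_add_mul_ediv]
      · simp [mul_comm (b / n), Int.emod_add_mul_ediv]
    have hz : ∀ (x : Multiplicative (ℤ × ℤ)) (k : ℤ), φ x = 1 → φ (x ^ k) = 1 := by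
      intro x k hx
      have : x ^ k ∈ φ.ker := φ.ker.zpow_mem hx k
      exact this
    rw [hab, map_mul, map_mul, hz _ _ hφX, hz _ _ hφY, mul_one, mul_one]
  have hfin : (Set.range φ).Finite := by
    refine (((Set.finite_Ico (0 : ℤ) m).prod (Set.finite_Ico (0 : ℤ) n)).image
      fun x => φ (.ofAdd x)).subset ?_
    rintro _ ⟨x, rfl⟩
    refine ⟨(x.toAdd.1 % m, x.toAdd.2 % n), ⟨?_, ?_⟩, (hmod _ _).symm⟩
    · exact ⟨Int.emod_nonneg _ (by omega), Int.emod_lt_of_pos _ (by omega)⟩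
    · exact ⟨Int.emod_nonneg _ (by omega), Int.emod_lt_of_pos _ (by omega)⟩
  have hspan : Submodule.span (ZMod N) (Set.range φ) = ⊤ := by
    refine eq_top_iff.2 fun y _ => ?_
    obtain ⟨y, rfl⟩ := Ideal.Quotient.mk_surjective y
    induction y using AddMonoidAlgebra.induction_linear with
    | zero => exact zero_mem _
    | add x y hx hy =>
      rw [map_add]
      exact add_mem (hx trivial) (hy trivial)
    | single a b =>
      have : (single a b : RR N) = b • single a 1 := by simp
      rw [this, ← Ideal.Quotient.mkₐ_eq_mk (ZMod N), map_smul]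
      exact Submodule.smul_mem _ _ (Submodule.subset_span ⟨.ofAdd a, rfl⟩)
  have : Module.Finite (ZMod N) (RR N ⧸ I) := ⟨hspan ▸ Submodule.fg_span hfin⟩
  exact Module.finite_of_finite (ZMod N)

theorem KoszulExact.finite_quotient_of_prime {p : ℕ} [Fact p.Prime] {f g : RR p}
    (h : KoszulExact f g) : Finite (RR p ⧸ Ideal.span {f, g}) := by
  obtain ⟨m, hm, hX⟩ := h.exists_single_left_sub_one_mem
  obtain ⟨n, hn, hY⟩ := h.exists_single_right_sub_one_mem
  exact finite_quotient_of_single_sub_one_mem hm hn hX hY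

theorem KoszulExact.finite_quotient {N : ℕ} (hN : N ≠ 0) {f g : RR N} (h : KoszulExact f g) :
    Finite (RR N ⧸ Ideal.span {f, g}) := by
  refine finite_quotient_of_forall_prime hN (natCast_self_RR N) _ ?_
  rintro p hp ⟨m, rfl⟩
  have : Fact p.Prime := ⟨hp⟩
  have := (h.laurentReduction hp.ne_zero (right_ne_zero_of_mul hN)).finite_quotient_of_prime
  let J := (Ideal.span {_root_.laurentReduction p m f, _root_.laurentReduction p m g}).comap
    (_root_.laurentReduction p m)
  have hJ : Finite (RR (p * m) ⧸ J) :=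
    Finite.of_injective _ (Ideal.quotientMap_injective (f := _root_.laurentReduction p m))
  refine Finite.of_surjective _ (Ideal.Quotient.factor_surjective (S := J) fun x hx => ?_)
  obtain ⟨u, v, huv⟩ := Ideal.mem_span_pair.1 (Ideal.mem_comap.1 hx)
  obtain ⟨u, rfl⟩ := laurentReduction_surjective p m u
  obtain ⟨v, rfl⟩ := laurentReduction_surjective p m v
  have hd : (p : RR (p * m)) ∣ x - (u * f + v * g) := by
    refine natCast_dvd_of_laurentReduction_eq_zero ?_
    rw [map_sub, map_add, map_mul, map_mul, huv, sub_self]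
  rw [← add_sub_cancel (u * f + v * g) x]
  exact Submodule.add_mem_sup (Ideal.mem_span_pair.2 ⟨u, v, rfl⟩)
    (Ideal.mem_span_singleton.2 hd)

/-- Monomials have finite order in a finite quotient. -/
theorem exists_single_nsmul_sub_one_mem {N : ℕ} (I : Ideal (RR N)) [Finite (RR N ⧸ I)]
    (a : ℤ × ℤ) : ∃ n : ℕ, n ≠ 0 ∧ single (n • a) 1 - 1 ∈ I := by
  obtain ⟨i, j, hij, h⟩ := Finite.exists_ne_map_eq_of_infinite
    fun i : ℕ => Ideal.Quotient.mk I (single (i • a) 1)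
  wlog hlt : i < j generalizing i j
  · exact this j i hij.symm h.symm (by omega)
  refine ⟨j - i, by omega, ?_⟩
  have hmul : (single ((j - i) • a) 1 - 1 : RR N) =
      single (-(i • a)) 1 * (single (j • a) 1 - single (i • a) 1) := by
    rw [mul_sub, single_mul_single, single_mul_single, neg_add_cancel, sub_nsmul a hlt.le,
      one_mul, one_def, add_comm]
  rw [hmul]
  exact Ideal.mul_mem_left _ _ (Ideal.Quotient.eq.1 h.symm)

theorem koszulExact_of_finite_quotient {N : ℕ} {f g : RR N}
    (h : Finite (RR N ⧸ Ideal.span {f, g})) : KoszulExact f g := by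
  obtain ⟨m, hm, hX⟩ := exists_single_nsmul_sub_one_mem (Ideal.span {f, g}) (1, 0)
  obtain ⟨n, hn, hY⟩ := exists_single_nsmul_sub_one_mem (Ideal.span {f, g}) (0, 1)
  refine KoszulExact.of_ringEquiv (laurentCurry N) ?_
  have key : ∀ x ∈ Ideal.span {f, g}, laurentCurry N x ∈
      Ideal.span {laurentCurry N f, laurentCurry N g} := fun x hx =>
    mem_span_pair_of_ringEquiv (laurentCurry N).symm (by simpa using hx)
  refine koszulExact_of_regular (a := LaurentPolynomial.T m - 1)
    (b := LaurentPolynomial.C (LaurentPolynomial.T n - 1)) ?_ ?_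
    (LaurentPolynomial.T_sub_one_mem_nonZeroDivisors hm)
    (LaurentPolynomial.T_sub_one_dvd_of_dvd_C_mul hm
      (LaurentPolynomial.T_sub_one_mem_nonZeroDivisors hn))
  · simpa [laurentCurry_single_left] using key _ hX
  · simpa [laurentCurry_single_right] using key _ hY

end ZModLaurent

theorem stmt1 (N : ℕ) (hN : 0 < N) (f g : RR N) :
    IsTopological f g ↔ Finite (RR N ⧸ Ideal.span {f, g}) :=
  ⟨fun h => KoszulExact.finite_quotient hN.ne' h, koszulExact_of_finite_quotient⟩
end

section
/- McCoy's theorem for Laurent polynomial rings: let S be a commutative ring, m ≥ 1, and h an element of the Laurent polynomial ring in m variables over S, realized as AddMonoidAlgebra S (Fin m → ℤ). Then there exists a nonzero k in this ring with h * k = 0 if and only if there exists a nonzero element s ∈ S with s • h = 0. -/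
namespace AddMonoidAlgebra

variable {R A : Type*} [CommRing R] [Add A]

/-- If every coefficient of `f` annihilates `g`, then `f * g = 0`. -/
theorem mul_eq_zero_of_forall_coeff_smul_eq_zero {f g : AddMonoidAlgebra R A}
    (hfg : ∀ a, f.coeff a • g = 0) : f * g = 0 := by
  classical
  ext x
  rw [coeff_mul]
  refine Finset.sum_eq_zero fun a _ ↦ Finset.sum_eq_zero fun b _ ↦ ?_
  have hab : f.coeff a * g.coeff b = 0 := by
    simpa using congrArg (fun p ↦ p.coeff b) (hfg a)
  simp [hab]

/-- Discarding from `f` the terms whose coefficients annihilate `g` does not change `f * g`. -/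
theorem ofCoeff_filter_smul_ne_zero_mul (f g : AddMonoidAlgebra R A)
    [DecidablePred fun a ↦ f.coeff a • g ≠ 0] :
    ofCoeff (f.coeff.filter fun a ↦ f.coeff a • g ≠ 0) * g = f * g := by
  have hzero : ofCoeff (f.coeff.filter fun a ↦ ¬ f.coeff a • g ≠ 0) * g = 0 := by
    refine mul_eq_zero_of_forall_coeff_smul_eq_zero fun a ↦ ?_
    by_cases ha : f.coeff a • g = 0 <;> simp [ha]
  have hsum : ofCoeff (f.coeff.filter fun a ↦ f.coeff a • g ≠ 0) +
      ofCoeff (f.coeff.filter fun a ↦ ¬ f.coeff a • g ≠ 0) = f :=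
    congrArg ofCoeff (Finsupp.filter_add_filter_not f.coeff fun a ↦ f.coeff a • g ≠ 0)
  have hmul := congrArg (· * g) hsum
  simpa only [add_mul, hzero, add_zero] using hmul

/-- If `f * g = 0` and some coefficient of `f` does not annihilate `g`, then some coefficient of
`f` takes `g` to a nonzero element with fewer terms. -/
theorem exists_coeff_smul_ne_zero_card_support_lt [UniqueSums A] {f g : AddMonoidAlgebra R A}
    (hfg : f * g = 0) (hf : ∃ a, f.coeff a • g ≠ 0) :
    ∃ a, f.coeff a • g ≠ 0 ∧
      (f.coeff a • g).coeff.support.card < g.coeff.support.card := by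
  classical
  obtain ⟨a₀, ha₀⟩ := hf
  have hg : g ≠ 0 := by rintro rfl; simp at ha₀
  have hfa₀ : f.coeff a₀ ≠ 0 := fun h0 ↦ ha₀ (by simp [h0])
  have hprod := ofCoeff_filter_smul_ne_zero_mul f g
  set f' := ofCoeff (f.coeff.filter fun a ↦ f.coeff a • g ≠ 0) with hf'
  have hf's : f'.coeff.support.Nonempty := ⟨a₀, by simp [hf', hfa₀, ha₀]⟩
  have hgs : g.coeff.support.Nonempty := by simpa using hg
  obtain ⟨a, ha, b, hb, hu⟩ := UniqueSums.uniqueAdd_of_nonempty hf's hgs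
  have hab := coeff_mul_add_of_uniqueAdd hu
  obtain ⟨-, ha⟩ : f.coeff a ≠ 0 ∧ f.coeff a • g ≠ 0 := by simpa [hf'] using ha
  have hfa : f'.coeff a = f.coeff a := by simp [hf', ha]
  rw [hprod, hfg, hfa, coeff_zero, Finsupp.zero_apply] at hab
  refine ⟨a, ha, Finset.card_lt_card ((Finset.ssubset_iff_of_subset ?_).2 ⟨b, hb, ?_⟩)⟩
  · exact Finsupp.support_smul
  · simp [← hab]

/-- **McCoy's theorem** for monoid algebras over monoids with unique sums: a zero divisor is
annihilated by a nonzero scalar. -/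
theorem exists_smul_eq_zero_of_mul_eq_zero [UniqueSums A] {f g : AddMonoidAlgebra R A}
    (hg : g ≠ 0) (hfg : f * g = 0) : ∃ r : R, r ≠ 0 ∧ r • f = 0 := by
  induction hn : g.coeff.support.card using Nat.strong_induction_on generalizing g with
  | _ n ih =>
    subst hn
    by_cases hf : ∃ a, f.coeff a • g ≠ 0
    · obtain ⟨a, ha, hlt⟩ := exists_coeff_smul_ne_zero_card_support_lt hfg hf
      exact ih _ hlt ha (by rw [mul_smul_comm, hfg, smul_zero]) rfl
    · push Not at hf
      obtain ⟨b, hb⟩ : ∃ b, g.coeff b ≠ 0 := Finsupp.ne_iff.1 (mt coeff_eq_zero.1 hg)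
      refine ⟨g.coeff b, hb, ?_⟩
      ext a
      simpa [mul_comm] using congrArg (fun p ↦ p.coeff b) (hf a)

end AddMonoidAlgebra

/-- McCoy's theorem for Laurent polynomial rings: a Laurent polynomial `h` in `m` variables
over a commutative ring `S` is a zero divisor iff it is annihilated by a nonzero scalar. -/
theorem stmt4 (S : Type*) [CommRing S] (m : ℕ) (hm : 1 ≤ m)
    (h : AddMonoidAlgebra S (Fin m → ℤ)) :
    (∃ k : AddMonoidAlgebra S (Fin m → ℤ), k ≠ 0 ∧ h * k = 0) ↔
      (∃ s : S, s ≠ 0 ∧ s • h = 0) := by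
  constructor
  · rintro ⟨k, hk, hhk⟩
    exact AddMonoidAlgebra.exists_smul_eq_zero_of_mul_eq_zero hk hhk
  · rintro ⟨s, hs, hsh⟩
    have hs1 : s • (1 : AddMonoidAlgebra S (Fin m → ℤ)) ≠ 0 := fun h0 ↦
      hs (by simpa [AddMonoidAlgebra.one_def] using congrArg (fun p ↦ p.coeff 0) h0)
    exact ⟨s • 1, hs1, by rw [mul_smul_comm, mul_one, hsh]⟩
end

section
/- Let p be a prime, k ≥ 1, and f, g ∈ R_{p^k}. If the code BB_{p^k}(f,g) is topological, then it is not the case that both f and g lie in the ideal generated by the constant p, i.e., f ∉ Ideal.span {(p : R_{p^k})} or g ∉ Ideal.span {(p : R_{p^k})}. -/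
/-- The constant `p` is nilpotent in the Laurent polynomial ring over `ZMod (p ^ k)`. -/
theorem isNilpotent_natCast_RR (p k : ℕ) : IsNilpotent (p : RR (p ^ k)) := by
  refine ⟨k, ?_⟩
  have h := congrArg (algebraMap (ZMod (p ^ k)) (RR (p ^ k))) (ZMod.natCast_self (p ^ k))
  rwa [map_natCast, map_zero, Nat.cast_pow] at h

/-- If `a = h * (c * a)` with `c` nilpotent, then `a = 0`. -/
theorem eq_zero_of_eq_mul_nilpotent_mul {R : Type*} [CommRing R] {a c h : R}
    (hc : IsNilpotent c) (ha : a = h * (c * a)) : a = 0 := by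
  have hu : IsUnit (1 - h * c) := ((Commute.all h c).isNilpotent_mul_left hc).isUnit_one_sub
  exact hu.mul_right_eq_zero.mp (by linear_combination ha)

theorem stmt5 (p k : ℕ) (hp : p.Prime) (hk : 1 ≤ k) (f g : RR (p ^ k))
    (htopo : IsTopological f g) :
    f ∉ Ideal.span {(p : RR (p ^ k))} ∨ g ∉ Ideal.span {(p : RR (p ^ k))} := by
  by_contra! hmem
  obtain ⟨f', rfl⟩ := Ideal.mem_span_singleton.mp hmem.1
  obtain ⟨g', rfl⟩ := Ideal.mem_span_singleton.mp hmem.2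
  have hnil := isNilpotent_natCast_RR p k
  obtain ⟨h, hg, hf⟩ := htopo g' (-f') (by ring)
  have hg0 : g' = 0 := eq_zero_of_eq_mul_nilpotent_mul hnil hg
  have hf0 : f' = 0 := eq_zero_of_eq_mul_nilpotent_mul hnil (neg_injective hf)
  subst hg0 hf0
  obtain ⟨u, hu, -⟩ := htopo 1 0 (by simp)
  have : Fact (1 < p ^ k) := ⟨Nat.one_lt_pow (by omega) hp.one_lt⟩
  simp at hu
end

section
/- Let p be a prime, k ≥ 1, and f, g ∈ R_{p^k} such that BB_{p^k}(f,g) is topological, and let M = R_{p^k} ⧸ Ideal.span {f, g}, viewed as a ZMod (p^k)-module. Then for every m ∈ M, one has (p : ZMod (p^k)) • m = 0 if and only if there exists m' ∈ M with m = (p : ZMod (p^k))^(k-1) • m'. (Equivalently, the annihilator of p in M equals p^{k-1}·M, i.e., Tor_1 over ZMod (p^k) of ZMod (p^k)/(p) with M vanishes.) -/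
/-- If the annihilator of `u` in `R` is contained in `v R`, the same holds for the constants `u`
and `v` in `R[G]`. -/
theorem AddMonoidAlgebra.exists_eq_smul_of_smul_eq_zero {R G : Type*} [CommRing R] {u v : R}
    (huv : ∀ c : R, u * c = 0 → ∃ d, c = v * d) (x : AddMonoidAlgebra R G) (hx : u • x = 0) :
    ∃ y : AddMonoidAlgebra R G, x = v • y := by
  have hcoeff (i : G) : u * x.coeff i = 0 := by
    have := congrArg (fun z : AddMonoidAlgebra R G => z.coeff i) hx
    simpa using this
  choose d hd using fun i => huv _ (hcoeff i)
  refine ⟨∑ i ∈ x.coeff.support, AddMonoidAlgebra.single i (d i), ?_⟩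
  conv_lhs => rw [← AddMonoidAlgebra.sum_coeff_single x]
  rw [Finset.smul_sum, Finsupp.sum]
  refine Finset.sum_congr rfl fun i _ => ?_
  rw [AddMonoidAlgebra.smul_single, smul_eq_mul, ← hd i]

theorem ZMod.exists_eq_pow_mul_of_pow_mul_eq_zero {p a b : ℕ} (hp : p ≠ 0)
    (c : ZMod (p ^ (a + b))) (hc : (p : ZMod (p ^ (a + b))) ^ a * c = 0) :
    ∃ d, c = (p : ZMod (p ^ (a + b))) ^ b * d := by
  obtain ⟨n, rfl⟩ := ZMod.intCast_surjective c
  have h : ((p ^ (a + b) : ℕ) : ℤ) ∣ (p : ℤ) ^ a * n := by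
    rw [← ZMod.intCast_zmod_eq_zero_iff_dvd]
    exact_mod_cast hc
  rw [Nat.cast_pow, pow_add] at h
  obtain ⟨m, rfl⟩ := (mul_dvd_mul_iff_left (by positivity)).1 h
  exact ⟨m, by push_cast; rfl⟩

/-- Over a Noetherian ring, exactness of the Koszul complex of `(f, g)` in the middle implies
exactness on the left. -/
theorem eq_zero_of_mul_eq_zero_of_koszul_exact {R : Type*} [CommRing R] [IsNoetherianRing R]
    {f g : R} (hex : ∀ r s : R, r * f + s * g = 0 → ∃ h : R, r = h * g ∧ s = -(h * f))
    {x : R} (hf : x * f = 0) (hg : x * g = 0) : x = 0 := by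
  have hdiv (n : ℕ) : ∃ y, x = y * g ^ n ∧ y * f = 0 := by
    induction n with
    | zero => exact ⟨x, by simp, hf⟩
    | succ n ih =>
      obtain ⟨y, hy, hyf⟩ := ih
      obtain ⟨z, hz, hzf⟩ := hex y 0 (by simpa using hyf)
      exact ⟨z, by rw [hy, hz]; ring, by simpa using hzf.symm⟩
  let A : ℕ →o Ideal R :=
    { toFun := fun n => LinearMap.ker (LinearMap.mulRight R (g ^ n))
      monotone' := monotone_nat_of_le_succ fun n y hy => by
        simp only [LinearMap.mem_ker, LinearMap.mulRight_apply] at hy ⊢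
        rw [pow_succ, ← mul_assoc, hy, zero_mul] }
  obtain ⟨n, hn⟩ := monotone_stabilizes_iff_noetherian.2 ‹IsNoetherianRing R› A
  obtain ⟨y, rfl, -⟩ := hdiv n
  have hy : y ∈ A (n + 1) := by
    change y * g ^ (n + 1) = 0
    rw [pow_succ, ← mul_assoc, hg]
  rw [← hn (n + 1) n.le_succ] at hy
  exact hy

theorem stmt6 (p k : ℕ) (hp : p.Prime) (hk : 1 ≤ k) (f g : RR (p ^ k))
    (htopo : IsTopological f g) :
    ∀ m : RR (p ^ k) ⧸ Ideal.span {f, g},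
      (p : ZMod (p ^ k)) • m = 0 ↔
        ∃ m' : RR (p ^ k) ⧸ Ideal.span {f, g},
          m = ((p : ZMod (p ^ k)) ^ (k - 1)) • m' := by
  obtain ⟨l, rfl⟩ := Nat.exists_eq_add_of_le' hk
  rw [Nat.add_sub_cancel]
  have hpow : (p : ZMod (p ^ (l + 1))) ^ (l + 1) = 0 := by
    exact_mod_cast ZMod.natCast_self (p ^ (l + 1))
  have : NeZero (p ^ (l + 1)) := ⟨pow_ne_zero _ hp.ne_zero⟩
  have : IsNoetherianRing (ZMod (p ^ (l + 1))) := isNoetherian_of_finite _ _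
  have hnoeth : IsNoetherianRing (RR (p ^ (l + 1))) :=
    Algebra.FiniteType.isNoetherianRing (ZMod (p ^ (l + 1))) _
  have hann_pow : ∀ x : RR (p ^ (l + 1)), (p : ZMod (p ^ (l + 1))) ^ l • x = 0 →
      ∃ y : RR (p ^ (l + 1)), x = (p : ZMod (p ^ (l + 1))) • y :=
    AddMonoidAlgebra.exists_eq_smul_of_smul_eq_zero fun c hc => by
      simpa using ZMod.exists_eq_pow_mul_of_pow_mul_eq_zero hp.ne_zero c hc
  have hann : ∀ x : RR (p ^ (l + 1)), (p : ZMod (p ^ (l + 1))) • x = 0 →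
      ∃ y : RR (p ^ (l + 1)), x = (p : ZMod (p ^ (l + 1))) ^ l • y :=
    AddMonoidAlgebra.exists_eq_smul_of_smul_eq_zero fun c hc => by
      have key := ZMod.exists_eq_pow_mul_of_pow_mul_eq_zero (a := 1) (b := l) hp.ne_zero
      rw [add_comm 1 l] at key
      exact key c (by simpa using hc)
  generalize (p : ZMod (p ^ (l + 1))) = q at *
  intro m
  constructor
  · obtain ⟨m, rfl⟩ := Ideal.Quotient.mk_surjective m
    intro hm
    have hmem : q • m ∈ Ideal.span {f, g} := Ideal.Quotient.eq_zero_iff_mem.1 hm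
    obtain ⟨a, b, hab⟩ := Ideal.mem_span_pair.1 hmem
    obtain ⟨h, hha, hhb⟩ := htopo (q ^ l • a) (q ^ l • b) (by
      rw [smul_mul_assoc, smul_mul_assoc, ← smul_add, hab, smul_smul, ← pow_succ, hpow, zero_smul])
    have hqh : q • h = 0 := by
      refine eq_zero_of_mul_eq_zero_of_koszul_exact htopo ?_ ?_
      · rw [smul_mul_assoc, ← neg_eq_zero, ← smul_neg, ← hhb, smul_smul, ← pow_succ', hpow,
          zero_smul]
      · rw [smul_mul_assoc, ← hha, smul_smul, ← pow_succ', hpow, zero_smul]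
    obtain ⟨h, rfl⟩ := hann h hqh
    obtain ⟨c, hc⟩ := hann_pow (a - h * g) (by rw [smul_sub, hha, smul_mul_assoc, sub_self])
    obtain ⟨d, hd⟩ := hann_pow (b + h * f) (by
      rw [smul_add, hhb, smul_mul_assoc, neg_add_cancel])
    obtain ⟨y, hy⟩ := hann (m - (c * f + d * g)) (by
      rw [smul_sub, ← hab, smul_add, ← smul_mul_assoc, ← smul_mul_assoc, ← hc, ← hd]
      ring)
    refine ⟨Ideal.Quotient.mk _ y, ?_⟩
    change _ = Ideal.Quotient.mk _ (q ^ l • y)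
    rw [← hy, Ideal.Quotient.mk_eq_mk_iff_sub_mem, sub_sub_cancel]
    exact Ideal.mem_span_pair.2 ⟨c, d, rfl⟩
  · rintro ⟨m', rfl⟩
    rw [smul_smul, ← pow_succ', hpow, zero_smul]
end

section
/- Let N, L_x, L_y be positive integers, let R_L = AddMonoidAlgebra (ZMod N) (ZMod L_x × ZMod L_y) (the Laurent polynomial ring over ZMod N with periodic boundary conditions x^{L_x} = y^{L_y} = 1), and let bar denote the ring automorphism of R_L induced by negation on the group ZMod L_x × ZMod L_y (i.e., x ↦ x^{-1}, y ↦ y^{-1}). Then for all f, g ∈ R_L, the cardinality of the annihilator {r ∈ R_L | (bar f) * r = 0 ∧ (bar g) * r = 0} equals the cardinality of the quotient R_L ⧸ Ideal.span {f, g}. -/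
/-- The torus Laurent polynomial ring `(ZMod N)[x^{±1}, y^{±1}]/(x^{L_x}-1, y^{L_y}-1)`. -/
abbrev RL (N Lx Ly : ℕ) : Type := AddMonoidAlgebra (ZMod N) (ZMod Lx × ZMod Ly)

/-- The ring endomorphism `bar` induced by negation on exponents, `x ↦ x⁻¹`, `y ↦ y⁻¹`. -/
noncomputable def bar (N Lx Ly : ℕ) : RL N Lx Ly →+* RL N Lx Ly :=
  AddMonoidAlgebra.mapDomainRingHom (ZMod N)
    (negAddMonoidHom : ZMod Lx × ZMod Ly →+ ZMod Lx × ZMod Ly)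

/-- A primitive additive character of a finite commutative ring identifies the annihilator of an
ideal with the character group of the quotient. -/
theorem card_annihilator_eq_card_quotient {R : Type*} [CommRing R] [Finite R]
    {ψ : AddChar R ℂ} (hψ : ψ.IsPrimitive) (I : Ideal R) :
    Nat.card {r : R | ∀ a ∈ I, a * r = 0} = Nat.card (R ⧸ I) := by
  classical
  have := Fintype.ofFinite R
  have := Fintype.ofFinite (R ⧸ I)
  have hbij : Function.Bijective ψ.mulShift :=
    (Fintype.bijective_iff_injective_and_card _).2
      ⟨AddChar.to_mulShift_inj_of_isPrimitive hψ, AddChar.card_eq.symm⟩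
  let F : {r : R | ∀ a ∈ I, a * r = 0} → AddChar (R ⧸ I) ℂ := fun r =>
    AddChar.toAddMonoidHomEquiv.symm
      (QuotientAddGroup.lift I.toAddSubgroup (AddChar.toAddMonoidHomEquiv (ψ.mulShift r.1))
        fun a ha => by
          have h : r.1 * a = 0 := by rw [mul_comm]; exact r.2 a ha
          simp [h])
  have hF (r) (a : R) : F r (Ideal.Quotient.mk I a) = ψ.mulShift r.1 a := rfl
  have hFbij : Function.Bijective F := by
    refine ⟨fun r s h => Subtype.ext (hbij.1 ?_), fun χ => ?_⟩
    · ext a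
      rw [← hF, ← hF, h]
    · obtain ⟨r, hr⟩ := hbij.2 (χ.compAddMonoidHom (Ideal.Quotient.mk I).toAddMonoidHom)
      have hr' (a : R) : ψ (r * a) = χ (Ideal.Quotient.mk I a) := DFunLike.congr_fun hr a
      refine ⟨⟨r, fun a ha => ?_⟩, ?_⟩
      · by_contra hne
        refine hψ hne (DFunLike.ext _ _ fun s => ?_)
        have hmem : Ideal.Quotient.mk I (a * s) = 0 :=
          Ideal.Quotient.eq_zero_iff_mem.2 (I.mul_mem_right s ha)
        rw [AddChar.mulShift_apply, mul_comm a r, mul_assoc, hr', hmem, AddChar.map_zero_eq_one,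
          AddChar.one_apply]
      · ext q
        obtain ⟨a, rfl⟩ := Ideal.Quotient.mk_surjective q
        rw [hF, AddChar.mulShift_apply, hr']
  rw [Nat.card_eq_of_bijective F hFbij, Nat.card_eq_fintype_card, Nat.card_eq_fintype_card,
    AddChar.card_eq]

/-- The standard character of the constant coefficient is primitive on a group algebra over
`ZMod N`. -/
theorem exists_isPrimitive_addMonoidAlgebra (N : ℕ) [NeZero N] (G : Type*) [AddCommGroup G] :
    ∃ ψ : AddChar (AddMonoidAlgebra (ZMod N) G) ℂ, ψ.IsPrimitive := by
  refine ⟨(ZMod.stdAddChar (N := N)).compAddMonoidHom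
    ((Finsupp.applyAddHom (0 : G)).comp AddMonoidAlgebra.coeffAddEquiv.toAddMonoidHom),
    fun r hr h => hr ?_⟩
  ext g
  have hg := DFunLike.congr_fun h (AddMonoidAlgebra.single (-g) 1)
  rw [AddChar.one_apply, ← AddChar.map_zero_eq_one (ZMod.stdAddChar (N := N))] at hg
  simpa using ZMod.injective_stdAddChar hg

theorem bar_involutive (N Lx Ly : ℕ) : Function.Involutive (bar N Lx Ly) := by
  intro r
  ext g
  simp [bar, ← Finsupp.mapDomain_comp]

theorem stmt8 (N Lx Ly : ℕ) (hN : 0 < N) (hLx : 0 < Lx) (hLy : 0 < Ly)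
    (f g : RL N Lx Ly) :
    Nat.card {r : RL N Lx Ly | bar N Lx Ly f * r = 0 ∧ bar N Lx Ly g * r = 0} =
      Nat.card (RL N Lx Ly ⧸ Ideal.span {f, g}) := by
  have := NeZero.of_pos hN
  have := NeZero.of_pos hLx
  have := NeZero.of_pos hLy
  have : Finite (RL N Lx Ly) := Finite.of_equiv _ AddMonoidAlgebra.coeffEquiv.symm
  obtain ⟨ψ, hψ⟩ := exists_isPrimitive_addMonoidAlgebra N (ZMod Lx × ZMod Ly)
  rw [← card_annihilator_eq_card_quotient hψ]
  have hbar := bar_involutive N Lx Ly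
  refine Nat.card_congr (hbar.toPerm.subtypeEquiv fun r => ?_)
  have key (f : RL N Lx Ly) : bar N Lx Ly f * r = 0 ↔ f * bar N Lx Ly r = 0 := by
    rw [← map_eq_zero_iff (bar N Lx Ly) hbar.injective, map_mul, hbar f]
  change bar N Lx Ly f * r = 0 ∧ bar N Lx Ly g * r = 0 ↔
    ∀ a ∈ Ideal.span {f, g}, a * bar N Lx Ly r = 0
  rw [key, key]
  refine ⟨fun ⟨hf, hg⟩ a ha => ?_, fun h => ⟨h f (Ideal.subset_span (by simp)),
    h g (Ideal.subset_span (by simp))⟩⟩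
  obtain ⟨u, v, rfl⟩ := Ideal.mem_span_pair.1 ha
  rw [add_mul, mul_assoc, mul_assoc, hf, hg, mul_zero, mul_zero, add_zero]
end

section
/- Let N be a positive integer and a an integer. Then there is a ring isomorphism R_N ⧸ Ideal.span {X − a, Y − a} ≅ ZMod N_a, where N_a is the largest divisor of N coprime to a. (This identifies the electric anyon group of the Watanabe–Cheng–Fuji model, so its anyon fusion group is ZMod N_a × ZMod N_a.) -/
/-- The monomial `X`. -/
noncomputable def Xv (N : ℕ) : RR N := AddMonoidAlgebra.single ((1 : ℤ), (0 : ℤ)) 1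

/-- The monomial `Y`. -/
noncomputable def Yv (N : ℕ) : RR N := AddMonoidAlgebra.single ((0 : ℤ), (1 : ℤ)) 1

/-- Two ring homomorphisms out of `(ZMod N)[X^{±1}, Y^{±1}]` agreeing on `X` and `Y` are equal. -/
theorem RR.ringHom_ext {N : ℕ} {S : Type*} [CommRing S] {f g : RR N →+* S}
    (hX : f (Xv N) = g (Xv N)) (hY : f (Yv N) = g (Yv N)) : f = g := by
  refine AddMonoidAlgebra.ringHom_ext' (Subsingleton.elim _ _) ?_
  have hfst := MonoidHom.ext_mint
    (f := ((f : RR N →* S).comp (AddMonoidAlgebra.of (ZMod N) (ℤ × ℤ))).comp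
      (AddMonoidHom.inl ℤ ℤ).toMultiplicative)
    (g := ((g : RR N →* S).comp (AddMonoidAlgebra.of (ZMod N) (ℤ × ℤ))).comp
      (AddMonoidHom.inl ℤ ℤ).toMultiplicative) hX
  have hsnd := MonoidHom.ext_mint
    (f := ((f : RR N →* S).comp (AddMonoidAlgebra.of (ZMod N) (ℤ × ℤ))).comp
      (AddMonoidHom.inr ℤ ℤ).toMultiplicative)
    (g := ((g : RR N →* S).comp (AddMonoidAlgebra.of (ZMod N) (ℤ × ℤ))).comp
      (AddMonoidHom.inr ℤ ℤ).toMultiplicative) hY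
  refine MonoidHom.ext fun x => ?_
  obtain ⟨⟨m, n⟩, rfl⟩ := Multiplicative.ofAdd.surjective x
  have hmn : (Multiplicative.ofAdd ((m, n) : ℤ × ℤ)) =
      Multiplicative.ofAdd ((m, 0) : ℤ × ℤ) * Multiplicative.ofAdd ((0, n) : ℤ × ℤ) := by
    rw [← ofAdd_add]; simp
  rw [hmn, map_mul, map_mul]
  exact congrArg₂ (· * ·) (DFunLike.congr_fun hfst (Multiplicative.ofAdd m))
    (DFunLike.congr_fun hsnd (Multiplicative.ofAdd n))

/-- Evaluation of Laurent polynomials at a pair of units. -/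
theorem RR.exists_ringHom {N : ℕ} {S : Type*} [CommRing S] (c : ZMod N →+* S) (u v : Sˣ) :
    ∃ f : RR N →+* S, f (Xv N) = u ∧ f (Yv N) = v := by
  let φ : Multiplicative (ℤ × ℤ) →* S :=
    { toFun := fun x => ((u ^ x.toAdd.1 * v ^ x.toAdd.2 : Sˣ) : S)
      map_one' := by simp
      map_mul' := fun x y => by
        rw [← Units.val_mul, toAdd_mul, Prod.fst_add, Prod.snd_add, zpow_add, zpow_add,
          mul_mul_mul_comm] }
  refine ⟨AddMonoidAlgebra.liftNCRingHom c φ fun _ _ => Commute.all _ _, ?_, ?_⟩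
  · simp [Xv, φ]
  · simp [Yv, φ]

theorem Xv_isUnit (N : ℕ) : IsUnit (Xv N) := by
  refine IsUnit.of_mul_eq_one (AddMonoidAlgebra.single ((-1 : ℤ), (0 : ℤ)) 1) ?_
  simp [Xv, AddMonoidAlgebra.single_mul_single, AddMonoidAlgebra.one_def, Prod.zero_eq_mk]

/-- A nonzero natural number whose prime factors all divide an integer that is invertible in `S`
is invertible in `S`. -/
theorem isUnit_natCast_of_prime_dvd {S : Type*} [CommRing S] {a : ℤ} (ha : IsUnit (a : S))
    {m : ℕ} (hm : m ≠ 0) (h : ∀ p : ℕ, p.Prime → p ∣ m → (p : ℤ) ∣ a) : IsUnit (m : S) := by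
  induction m using induction_on_primes with
  | zero => exact absurd rfl hm
  | one => simp
  | prime_mul p m hp ih =>
    rw [Nat.cast_mul]
    refine IsUnit.mul ?_ (ih (right_ne_zero_of_mul hm) fun q hq hqm => h q hq (hqm.mul_left p))
    have hpa := map_dvd (Int.castRingHom S) (h p hp (dvd_mul_right p m))
    simp only [eq_intCast, Int.cast_natCast] at hpa
    exact isUnit_of_dvd_unit hpa ha

/-- Prime factors of the cofactor of the largest divisor of `N` coprime to `a` divide `a`. -/
theorem prime_dvd_of_dvd_cofactor {a : ℤ} {d m : ℕ} (hd : 0 < d) (hcop : IsCoprime (d : ℤ) a)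
    (hmax : ∀ e : ℕ, e ∣ d * m → IsCoprime (e : ℤ) a → e ≤ d)
    {p : ℕ} (hp : p.Prime) (hpm : p ∣ m) : (p : ℤ) ∣ a := by
  by_contra hpa
  have hle := hmax (d * p) (mul_dvd_mul_left d hpm) (by
    rw [Nat.cast_mul]
    exact hcop.mul_left ((Nat.prime_iff_prime_int.mp hp).coprime_iff_not_dvd.mpr hpa))
  exact absurd hle (not_le.mpr (lt_mul_of_one_lt_right hd hp.one_lt))

/-- The electric anyon group of the Watanabe–Cheng–Fuji model `BB_N(X - a, Y - a)` is
`ZMod N_a`, where `N_a` is the largest divisor of `N` coprime to `a`. -/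
theorem stmt9 (N : ℕ) (hN : 0 < N) (a : ℤ) (Na : ℕ)
    (hNa_dvd : Na ∣ N) (hNa_cop : IsCoprime (Na : ℤ) a)
    (hNa_max : ∀ d : ℕ, d ∣ N → IsCoprime ((d : ℤ)) a → d ≤ Na) :
    Nonempty ((RR N ⧸ Ideal.span {Xv N - (a : RR N), Yv N - (a : RR N)}) ≃+* ZMod Na) := by
  obtain ⟨m, rfl⟩ := hNa_dvd
  set I := Ideal.span {Xv (Na * m) - (a : RR (Na * m)), Yv (Na * m) - (a : RR (Na * m))} with hI
  have hX : Ideal.Quotient.mk I (Xv (Na * m)) = (a : RR (Na * m) ⧸ I) := by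
    rw [← map_intCast (Ideal.Quotient.mk I) a, Ideal.Quotient.eq]
    exact Ideal.subset_span (by simp)
  have hY : Ideal.Quotient.mk I (Yv (Na * m)) = (a : RR (Na * m) ⧸ I) := by
    rw [← map_intCast (Ideal.Quotient.mk I) a, Ideal.Quotient.eq]
    exact Ideal.subset_span (by simp)
  have ha : IsUnit (a : RR (Na * m) ⧸ I) := hX ▸ (Xv_isUnit _).map (Ideal.Quotient.mk I)
  have hm : IsUnit (m : RR (Na * m) ⧸ I) :=
    isUnit_natCast_of_prime_dvd ha (Nat.pos_of_mul_pos_left hN).ne' fun p hp hpm =>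
      prime_dvd_of_dvd_cofactor (Nat.pos_of_mul_pos_right hN) hNa_cop hNa_max hp hpm
  have hNa : (Na : RR (Na * m) ⧸ I) = 0 := by
    refine hm.mul_left_eq_zero.mp ?_
    have h := map_natCast ((Ideal.Quotient.mk I).comp
      (AddMonoidAlgebra.singleZeroRingHom : ZMod (Na * m) →+* RR (Na * m))) (Na * m)
    rw [ZMod.natCast_self, map_zero] at h
    exact_mod_cast h.symm
  obtain ⟨u, hu⟩ : IsUnit (a : ZMod Na) := by
    have h := hNa_cop.map (Int.castRingHom (ZMod Na))
    simpa [isCoprime_zero_left] using h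
  obtain ⟨f, hfX, hfY⟩ :=
    RR.exists_ringHom (ZMod.castHom (dvd_mul_right Na m) (ZMod Na)) u u
  have hfI : ∀ x ∈ I, f x = 0 := by
    intro x hx
    suffices h : I ≤ RingHom.ker f from h hx
    rw [hI, Ideal.span_le]
    rintro _ (rfl | rfl) <;> simp [RingHom.mem_ker, hfX, hfY, hu]
  have hchar : ringChar (RR (Na * m) ⧸ I) ∣ Na := ringChar.dvd hNa
  let g : ZMod Na →+* RR (Na * m) ⧸ I := ZMod.castHom hchar _
  exact ⟨RingEquiv.ofRingHom (Ideal.Quotient.lift I f hfI) g (Subsingleton.elim _ _)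
    (Ideal.Quotient.ringHom_ext (RR.ringHom_ext
      (by simp [hX]) (by simp [hY])))⟩
end

section
/- Let N, L_x, L_y be positive integers, a an integer, and N_a the largest divisor of N coprime to a. Then the cardinality of the quotient ring R_N ⧸ Ideal.span {X − a, Y − a, X^{L_x} − 1, Y^{L_y} − 1} equals the greatest common divisor gcd(N_a, a^{L_x} − 1, a^{L_y} − 1) (as a natural number, taking gcds of integers). Consequently, the ground state degeneracy of the Watanabe–Cheng–Fuji model on an L_x × L_y torus is gcd(N_a, a^{L_x} − 1, a^{L_y} − 1)². -/
/-- A divisor of `N` coprime to `a` divides the largest such divisor. -/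
theorem dvd_of_isCoprime_of_maximal {N Na d : ℕ} {a : ℤ} (hN : 0 < N) (hNa : Na ∣ N)
    (hNa_cop : IsCoprime (Na : ℤ) a)
    (hmax : ∀ d : ℕ, d ∣ N → IsCoprime (d : ℤ) a → d ≤ Na)
    (hd : d ∣ N) (hda : IsCoprime (d : ℤ) a) : d ∣ Na := by
  have hlcm : IsCoprime ((Nat.lcm d Na : ℕ) : ℤ) a :=
    (hda.mul_left hNa_cop).of_isCoprime_of_dvd_left
      (by exact_mod_cast Nat.lcm_dvd_mul d Na)
  have hle := hmax _ (Nat.lcm_dvd hd hNa) hlcm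
  have hpos : 0 < Nat.lcm d Na := Nat.pos_of_dvd_of_pos (Nat.lcm_dvd hd hNa) hN
  have heq : Nat.lcm d Na = Na :=
    le_antisymm hle (Nat.le_of_dvd hpos (Nat.dvd_lcm_right d Na))
  exact heq ▸ Nat.dvd_lcm_left d Na

/-- A divisor of `a ^ L - 1` with `L > 0` is coprime to `a`. -/
theorem isCoprime_of_dvd_pow_sub_one {d a : ℤ} {L : ℕ} (hL : 0 < L) (h : d ∣ a ^ L - 1) :
    IsCoprime d a := by
  obtain ⟨c, hc⟩ := h
  refine ⟨-c, a ^ (L - 1), ?_⟩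
  rw [pow_sub_one_mul hL.ne']
  linear_combination hc

/-- If `X` and `Y` map to the integer `a` whose powers `a ^ Lx` and `a ^ Ly` become `1`, then the
image of the Laurent polynomial ring consists of integers. -/
theorem exists_intCast_eq_of_map_eq {N Lx Ly : ℕ} (hLx : 0 < Lx) (hLy : 0 < Ly) {a : ℤ}
    {Q : Type*} [CommRing Q] (f : RR N →+* Q) (hX : f (Xv N) = a) (hY : f (Yv N) = a)
    (hax : (a : Q) ^ Lx = 1) (hay : (a : Q) ^ Ly = 1) (p : RR N) : ∃ k : ℤ, f p = k := by
  have add_mem : ∀ v w : ℤ × ℤ, (∃ k : ℤ, f (AddMonoidAlgebra.single v 1) = k) →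
      (∃ k : ℤ, f (AddMonoidAlgebra.single w 1) = k) →
      ∃ k : ℤ, f (AddMonoidAlgebra.single (v + w) 1) = k := by
    rintro v w ⟨k, hk⟩ ⟨l, hl⟩
    refine ⟨k * l, ?_⟩
    rw [Int.cast_mul, ← hk, ← hl, ← map_mul, AddMonoidAlgebra.single_mul_single, one_mul]
  have neg_mem : ∀ (v : ℤ × ℤ) (L : ℕ), 0 < L → f (AddMonoidAlgebra.single v 1) = a →
      (a : Q) ^ L = 1 → ∃ k : ℤ, f (AddMonoidAlgebra.single (-v) 1) = k := by
    intro v L hL hv ha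
    refine ⟨a ^ (L - 1), ?_⟩
    have hinv : f (AddMonoidAlgebra.single (-v) 1) * a = 1 := by
      rw [← hv, ← map_mul, AddMonoidAlgebra.single_mul_single, one_mul, neg_add_cancel,
        ← AddMonoidAlgebra.one_def, map_one]
    have hpow : (a : Q) * a ^ (L - 1) = 1 := by rw [mul_pow_sub_one hL.ne', ha]
    push_cast
    exact left_inv_eq_right_inv hinv hpow
  let S : AddSubmonoid (ℤ × ℤ) :=
    { carrier := {v | ∃ k : ℤ, f (AddMonoidAlgebra.single v 1) = k}
      zero_mem' := ⟨1, by rw [← AddMonoidAlgebra.one_def, map_one, Int.cast_one]⟩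
      add_mem' := fun hv hw => add_mem _ _ hv hw }
  have hS : ∀ v, v ∈ S := by
    rintro ⟨m, n⟩
    have hx : ((1, 0) : ℤ × ℤ) ∈ S := ⟨a, hX⟩
    have hy : ((0, 1) : ℤ × ℤ) ∈ S := ⟨a, hY⟩
    have hx' : (-(1, 0) : ℤ × ℤ) ∈ S := neg_mem _ Lx hLx hX hax
    have hy' : (-(0, 1) : ℤ × ℤ) ∈ S := neg_mem _ Ly hLy hY hay
    have key := S.add_mem
      (S.add_mem (S.nsmul_mem hx m.toNat) (S.nsmul_mem hx' (-m).toNat))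
      (S.add_mem (S.nsmul_mem hy n.toNat) (S.nsmul_mem hy' (-n).toNat))
    convert key using 1
    ext <;> simp <;> omega
  induction p using AddMonoidAlgebra.induction_linear with
  | zero => exact ⟨0, by simp⟩
  | add p q hp hq =>
    obtain ⟨k, hk⟩ := hp
    obtain ⟨l, hl⟩ := hq
    exact ⟨k + l, by rw [map_add, hk, hl, Int.cast_add]⟩
  | single v c =>
    obtain ⟨k, hk⟩ := hS v
    obtain ⟨z, rfl⟩ := ZMod.intCast_surjective c
    refine ⟨z * k, ?_⟩
    have hsingle : (AddMonoidAlgebra.single v (z : ZMod N) : RR N) =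
        (z : RR N) * AddMonoidAlgebra.single v 1 := by
      rw [← zsmul_eq_mul, AddMonoidAlgebra.smul_single, zsmul_one]
    rw [hsingle, map_mul, map_intCast, hk, Int.cast_mul]

/-- Evaluation of Laurent polynomials at `X = x` and `Y = y` for units `x`, `y` of `ZMod g`,
where `g ∣ N`. -/
theorem exists_ringHom_map_eq {N g : ℕ} (hg : g ∣ N) (x y : (ZMod g)ˣ) :
    ∃ φ : RR N →+* ZMod g, φ (Xv N) = x ∧ φ (Yv N) = y := by
  let χ : Multiplicative (ℤ × ℤ) →* ZMod g :=
    { toFun := fun v => ((x ^ v.toAdd.1 * y ^ v.toAdd.2 : (ZMod g)ˣ) : ZMod g)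
      map_one' := by simp
      map_mul' := fun v w => by
        rw [← Units.val_mul, toAdd_mul, Prod.fst_add, Prod.snd_add, zpow_add, zpow_add,
          mul_mul_mul_comm] }
  refine ⟨AddMonoidAlgebra.liftNCRingHom (ZMod.castHom hg (ZMod g)) χ
    (fun _ _ => Commute.all _ _), ?_, ?_⟩ <;>
  simp [AddMonoidAlgebra.liftNCRingHom, Xv, Yv, χ, ZMod.cast_one hg]

/-- Ground state degeneracy of the Watanabe–Cheng–Fuji model on an `L_x × L_y` torus:
the quotient ring has cardinality `gcd(N_a, a^{L_x} - 1, a^{L_y} - 1)`, hence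
`GSD = gcd(N_a, a^{L_x} - 1, a^{L_y} - 1)²`. -/
theorem stmt11 (N Lx Ly : ℕ) (hN : 0 < N) (hLx : 0 < Lx) (hLy : 0 < Ly)
    (a : ℤ) (Na : ℕ)
    (hNa_dvd : Na ∣ N) (hNa_cop : IsCoprime (Na : ℤ) a)
    (hNa_max : ∀ d : ℕ, d ∣ N → IsCoprime ((d : ℤ)) a → d ≤ Na) :
    Nat.card (RR N ⧸ Ideal.span
        {Xv N - (a : RR N), Yv N - (a : RR N), Xv N ^ Lx - 1, Yv N ^ Ly - 1}) =
      Int.gcd (Na : ℤ) (Int.gcd (a ^ Lx - 1) (a ^ Ly - 1)) := by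
  set g : ℕ := Int.gcd (Na : ℤ) (Int.gcd (a ^ Lx - 1) (a ^ Ly - 1)) with hg
  set I : Ideal (RR N) := Ideal.span
    {Xv N - (a : RR N), Yv N - (a : RR N), Xv N ^ Lx - 1, Yv N ^ Ly - 1} with hI
  have hgNa : g ∣ Na := by exact_mod_cast Int.gcd_dvd_left (Na : ℤ) _
  have hgxy : (g : ℤ) ∣ Int.gcd (a ^ Lx - 1) (a ^ Ly - 1) := Int.gcd_dvd_right _ _
  have hgx : (g : ℤ) ∣ a ^ Lx - 1 := hgxy.trans (Int.gcd_dvd_left _ _)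
  have hgy : (g : ℤ) ∣ a ^ Ly - 1 := hgxy.trans (Int.gcd_dvd_right _ _)
  have hgN : g ∣ N := hgNa.trans hNa_dvd
  have hax : (a : ZMod g) ^ Lx = 1 := by
    have h := (ZMod.intCast_zmod_eq_zero_iff_dvd _ g).2 hgx
    push_cast at h
    exact sub_eq_zero.1 h
  have hay : (a : ZMod g) ^ Ly = 1 := by
    have h := (ZMod.intCast_zmod_eq_zero_iff_dvd _ g).2 hgy
    push_cast at h
    exact sub_eq_zero.1 h
  obtain ⟨u, hu⟩ : IsUnit (a : ZMod g) := IsUnit.of_pow_eq_one hax hLx.ne'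
  obtain ⟨φ, hφX, hφY⟩ := exists_ringHom_map_eq hgN u u
  have hIφ : ∀ p ∈ I, φ p = 0 := by
    have hle : I ≤ RingHom.ker φ := by
      rw [hI, Ideal.span_le]
      rintro p (rfl | rfl | rfl | rfl) <;>
      simp [RingHom.mem_ker, hφX, hφY, hu, hax, hay]
    exact fun p hp => hle hp
  have mk_eq : ∀ {p q : RR N}, p - q ∈ ({Xv N - (a : RR N), Yv N - (a : RR N),
      Xv N ^ Lx - 1, Yv N ^ Ly - 1} : Set (RR N)) → Ideal.Quotient.mk I p = Ideal.Quotient.mk I q :=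
    fun h => Ideal.Quotient.eq.2 (Ideal.subset_span h)
  have hX : Ideal.Quotient.mk I (Xv N) = (a : RR N ⧸ I) := by
    rw [← map_intCast (Ideal.Quotient.mk I)]
    exact mk_eq (by simp)
  have hY : Ideal.Quotient.mk I (Yv N) = (a : RR N ⧸ I) := by
    rw [← map_intCast (Ideal.Quotient.mk I)]
    exact mk_eq (by simp)
  have hQx : (a : RR N ⧸ I) ^ Lx = 1 := by
    rw [← hX, ← map_pow, ← map_one (Ideal.Quotient.mk I)]
    exact mk_eq (by simp)
  have hQy : (a : RR N ⧸ I) ^ Ly = 1 := by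
    rw [← hY, ← map_pow, ← map_one (Ideal.Quotient.mk I)]
    exact mk_eq (by simp)
  -- The characteristic of the quotient divides `g`.
  have hQg : ((g : ℤ) : RR N ⧸ I) = 0 := by
    let c := ringChar (RR N ⧸ I)
    have hcN : c ∣ N := by
      refine ringChar.dvd ?_
      rw [← map_natCast (Ideal.Quotient.mk I), ← map_natCast (algebraMap (ZMod N) (RR N)),
        ZMod.natCast_self, map_zero, map_zero]
    have hcx : (c : ℤ) ∣ a ^ Lx - 1 :=
      (CharP.intCast_eq_zero_iff (RR N ⧸ I) c _).1 (by push_cast; rw [hQx, sub_self])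
    have hcy : (c : ℤ) ∣ a ^ Ly - 1 :=
      (CharP.intCast_eq_zero_iff (RR N ⧸ I) c _).1 (by push_cast; rw [hQy, sub_self])
    have hcNa : c ∣ Na := dvd_of_isCoprime_of_maximal hN hNa_dvd hNa_cop hNa_max hcN
      (isCoprime_of_dvd_pow_sub_one hLx hcx)
    refine (CharP.intCast_eq_zero_iff (RR N ⧸ I) c _).2 ?_
    exact Int.dvd_coe_gcd (by exact_mod_cast hcNa) (Int.dvd_coe_gcd hcx hcy)
  let ψ : RR N ⧸ I →+* ZMod g := Ideal.Quotient.lift I φ hIφ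
  have hψ : Function.Bijective ψ := by
    refine ⟨(injective_iff_map_eq_zero ψ).2 fun q hq => ?_, ZMod.ringHom_surjective ψ⟩
    obtain ⟨p, rfl⟩ := Ideal.Quotient.mk_surjective q
    obtain ⟨k, hk⟩ := exists_intCast_eq_of_map_eq hLx hLy _ hX hY hQx hQy p
    rw [hk, map_intCast, ZMod.intCast_zmod_eq_zero_iff_dvd] at hq
    obtain ⟨m, rfl⟩ := hq
    rw [hk, Int.cast_mul, hQg, zero_mul]
  rw [Nat.card_congr (Equiv.ofBijective ψ hψ), Nat.card_zmod]
end

section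
/- Let N be a positive integer, a an integer, and N_a the largest divisor of N coprime to a. Then there is an isomorphism of additive groups R_N ⧸ Ideal.span {(X − a)(X − 1), (Y − a)(Y − 1)} ≅ ZMod N × (ZMod N_a)³. (This identifies the electric anyon group of the Delfino–Chamon–You model; its full anyon fusion group is therefore (ZMod N)² × (ZMod N_a)⁶.) -/
/-- If `m` is the largest divisor of `n ≠ 0` coprime to `a`, then `n` divides `m * a ^ k`
for some `k`. -/
theorem exists_dvd_mul_pow_of_maximal_coprime_divisor {n m : ℕ} {a : ℤ} (hn : 0 < n)
    (hdvd : m ∣ n) (hcop : IsCoprime (m : ℤ) a)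
    (hmax : ∀ d : ℕ, d ∣ n → IsCoprime (d : ℤ) a → d ≤ m) :
    ∃ k : ℕ, (n : ℤ) ∣ m * a ^ k := by
  obtain ⟨c, rfl⟩ := hdvd
  have hm : 0 < m := Nat.pos_of_mul_pos_right hn
  have key : ∀ e : ℕ, e ∣ c → ∃ k : ℕ, (e : ℤ) ∣ a ^ k := by
    intro e
    induction e using induction_on_primes with
    | zero => intro h; simp_all
    | one => intro _; exact ⟨0, by simp⟩
    | prime_mul p e hp ih =>
      intro h
      obtain ⟨k, hk⟩ := ih (dvd_of_mul_left_dvd h)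
      have hpa : (p : ℤ) ∣ a := by
        by_contra hpa
        have hpc : IsCoprime (p : ℤ) a :=
          ((Nat.prime_iff_prime_int.mp hp).coprime_iff_not_dvd).2 hpa
        have hle := hmax (m * p) (Nat.mul_dvd_mul_left m (dvd_of_mul_right_dvd h))
          (by push_cast; exact hcop.mul_left hpc)
        nlinarith [hp.two_le]
      refine ⟨k + 1, ?_⟩
      rw [pow_succ']
      push_cast
      exact mul_dvd_mul hpa hk
  obtain ⟨k, hk⟩ := key c dvd_rfl
  exact ⟨k, by push_cast; exact mul_dvd_mul_left _ hk⟩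

/-- A unit `x` with `(x - a) * (x - 1) = 0` acts as `a` on `x - 1`, so the annihilator of `x - 1`
absorbs powers of `a`. -/
theorem natCast_mul_sub_one_eq_zero {C : Type*} [CommRing C] {x : Cˣ} {a : ℤ} {n m k : ℕ}
    (hx : ((x : C) - a) * (x - 1) = 0) (hn : (n : C) = 0) (hdvd : (n : ℤ) ∣ m * a ^ k) :
    (m : C) * (x - 1) = 0 := by
  have hpow : ∀ j : ℕ, (x : C) ^ j * (x - 1) = a ^ j * (x - 1) := by
    intro j
    induction j with
    | zero => simp
    | succ j ih => linear_combination (x : C) * ih + (a : C) ^ j * hx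
  have hma : (m : C) * a ^ k = 0 := by
    obtain ⟨c, hc⟩ := hdvd
    have := congrArg (Int.cast : ℤ → C) hc
    push_cast at this
    rw [this, hn, zero_mul]
  refine (x ^ k).isUnit.mul_right_eq_zero.mp ?_
  rw [Units.val_pow_eq_pow_val]
  linear_combination (m : C) * hpow k + ((x : C) - 1) * hma

/-- All integer powers of a unit `x` with `(x - a) * (x - 1) = 0` lie in `1 + ℤ (x - 1)`, provided
that `a` is invertible modulo an integer annihilating `x - 1`. -/
theorem exists_zpow_eq_one_add {C : Type*} [CommRing C] {x : Cˣ} {a : ℤ} {m : ℕ}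
    (hx : ((x : C) - a) * (x - 1) = 0) (hm : (m : C) * (x - 1) = 0)
    (hcop : IsCoprime (m : ℤ) a) (i : ℤ) :
    ∃ s : ℤ, ((x ^ i : Cˣ) : C) = 1 + s * (x - 1) := by
  obtain ⟨c, b, hcb⟩ := hcop
  have hcb' : (c : C) * m + b * a = 1 := by exact_mod_cast congrArg (Int.cast : ℤ → C) hcb
  induction i using Int.induction_on with
  | zero => exact ⟨0, by simp⟩
  | succ i ih =>
    obtain ⟨s, hs⟩ := ih
    refine ⟨1 + s * a, ?_⟩
    rw [zpow_add_one, Units.val_mul, hs]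
    push_cast
    linear_combination (s : C) * hx
  | pred i ih =>
    obtain ⟨s, hs⟩ := ih
    refine ⟨(s - 1) * b, ?_⟩
    rw [zpow_sub_one, Units.val_mul, hs, Units.mul_inv_eq_iff_eq_mul]
    push_cast
    linear_combination (1 - s : C) * (x - 1) * hcb' - (1 - s : C) * c * hm + (1 - s : C) * b * hx

/-- Evaluation of Laurent polynomials over `ZMod N` at a pair of units of a ring killed by `N`. -/
theorem exists_ringHom_eval {N : ℕ} {C : Type*} [CommRing C] (hN : (N : C) = 0) (x y : Cˣ) :
    ∃ f : RR N →+* C, f (Xv N) = x ∧ f (Yv N) = y := by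
  let _ : Algebra (ZMod N) C := (ZMod.castHom (ringChar.dvd hN) C).toAlgebra
  let F : Multiplicative (ℤ × ℤ) →* C :=
    { toFun := fun p => ((x ^ p.toAdd.1 * y ^ p.toAdd.2 : Cˣ) : C)
      map_one' := by simp
      map_mul' := fun p q => by
        rw [← Units.val_mul, toAdd_mul, Prod.fst_add, Prod.snd_add, zpow_add, zpow_add,
          mul_mul_mul_comm] }
  refine ⟨(AddMonoidAlgebra.lift (ZMod N) C (ℤ × ℤ) F : RR N →+* C), ?_, ?_⟩
  · simp [Xv, F]
  · simp [Yv, F]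

/-- The monomial `X`, as a unit. -/
noncomputable def unitX (N : ℕ) : (RR N)ˣ :=
  (AddMonoidAlgebra.of (ZMod N) (ℤ × ℤ)).toHomUnits (Multiplicative.ofAdd (1, 0))

/-- The monomial `Y`, as a unit. -/
noncomputable def unitY (N : ℕ) : (RR N)ˣ :=
  (AddMonoidAlgebra.of (ZMod N) (ℤ × ℤ)).toHomUnits (Multiplicative.ofAdd (0, 1))

theorem val_unitX (N : ℕ) : (unitX N : RR N) = Xv N := rfl

theorem val_unitY (N : ℕ) : (unitY N : RR N) = Yv N := rfl

theorem single_eq_zpow_mul_zpow (N : ℕ) (i j c : ℤ) :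
    (AddMonoidAlgebra.single (i, j) (c : ZMod N) : RR N) =
      (c : RR N) * ((unitX N ^ i * unitY N ^ j : (RR N)ˣ) : RR N) := by
  have h : unitX N ^ i * unitY N ^ j =
      (AddMonoidAlgebra.of (ZMod N) (ℤ × ℤ)).toHomUnits (Multiplicative.ofAdd (i, j)) := by
    rw [unitX, unitY, ← MonoidHom.map_zpow, ← MonoidHom.map_zpow, ← map_mul, ← ofAdd_zsmul,
      ← ofAdd_zsmul, ← ofAdd_add]
    simp
  rw [h, MonoidHom.coe_toHomUnits, AddMonoidAlgebra.of_apply, toAdd_ofAdd, ← zsmul_eq_mul,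
    AddMonoidAlgebra.smul_single, zsmul_eq_mul, mul_one]

/-- A quotient of the Laurent polynomial ring by an ideal containing the two relations is spanned
additively by `1, X - 1, Y - 1, (X - 1) * (Y - 1)`. -/
theorem exists_eq_intCast_combination {N m : ℕ} {a : ℤ} {C : Type*} [CommRing C]
    (f : RR N →+* C) (hX : (f (Xv N) - a) * (f (Xv N) - 1) = 0)
    (hY : (f (Yv N) - a) * (f (Yv N) - 1) = 0) (hmX : (m : C) * (f (Xv N) - 1) = 0)
    (hmY : (m : C) * (f (Yv N) - 1) = 0) (hcop : IsCoprime (m : ℤ) a) (p : RR N) :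
    ∃ r s t w : ℤ, f p = r + s * (f (Xv N) - 1) + t * (f (Yv N) - 1) +
      w * ((f (Xv N) - 1) * (f (Yv N) - 1)) := by
  induction p using AddMonoidAlgebra.induction_linear with
  | zero => exact ⟨0, 0, 0, 0, by simp⟩
  | add p q hp hq =>
    obtain ⟨r, s, t, w, h⟩ := hp
    obtain ⟨r', s', t', w', h'⟩ := hq
    refine ⟨r + r', s + s', t + t', w + w', ?_⟩
    rw [map_add, h, h']
    push_cast
    ring
  | single ij c =>
    obtain ⟨i, j⟩ := ij
    obtain ⟨c, rfl⟩ := ZMod.intCast_surjective c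
    obtain ⟨s, hs⟩ := exists_zpow_eq_one_add (x := Units.map (f : RR N →* C) (unitX N))
      hX hmX hcop i
    obtain ⟨t, ht⟩ := exists_zpow_eq_one_add (x := Units.map (f : RR N →* C) (unitY N))
      hY hmY hcop j
    rw [← map_zpow] at hs ht
    simp only [Units.coe_map, MonoidHom.coe_coe, val_unitX, val_unitY] at hs ht
    refine ⟨c, c * s, c * t, c * s * t, ?_⟩
    rw [single_eq_zpow_mul_zpow, Units.val_mul, map_mul, map_mul, map_intCast, hs, ht]
    push_cast
    ring

/-- If `a` is a unit of `A`, then `1 + ω` is a unit of `A[ω]/(ω² - (a - 1)ω)`. -/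
theorem exists_unit_quadraticAlgebra {A : Type*} [CommRing A] {a b : A} (hab : a * b = 1) :
    ∃ x : (QuadraticAlgebra A 0 (a - 1))ˣ, (x : QuadraticAlgebra A 0 (a - 1)) = ⟨1, 1⟩ := by
  refine ⟨Units.mkOfMulEqOne ⟨1, 1⟩ ⟨1, -b⟩ ?_, rfl⟩
  ext
  · simp [QuadraticAlgebra.re_one]
  · simp only [QuadraticAlgebra.im_mul, QuadraticAlgebra.im_one]
    linear_combination -hab

/-- There is a ring killed by `m` with units `x, y` satisfying the two relations for which
`1, x - 1, y - 1, (x - 1) * (y - 1)` are linearly independent modulo `m`. -/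
theorem exists_units_independent {m : ℕ} {a : ℤ} (hcop : IsCoprime (m : ℤ) a) :
    ∃ (C : Type) (_ : CommRing C) (x y : Cˣ), (m : C) = 0 ∧ ((x : C) - a) * (x - 1) = 0 ∧
      ((y : C) - a) * (y - 1) = 0 ∧ ∀ r s t w : ℤ,
        (r : C) + s * (x - 1) + t * (y - 1) + w * ((x - 1) * (y - 1)) = 0 →
          (s : ZMod m) = 0 ∧ (t : ZMod m) = 0 ∧ (w : ZMod m) = 0 := by
  obtain ⟨c, b, hcb⟩ := hcop
  have hab : (a : ZMod m) * b = 1 := by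
    have := congrArg (Int.cast : ℤ → ZMod m) hcb
    push_cast at this
    rw [ZMod.natCast_self] at this
    linear_combination this
  let B := QuadraticAlgebra (ZMod m) 0 ((a : ZMod m) - 1)
  have habB : (a : B) * b = 1 := by
    have := congrArg (algebraMap (ZMod m) B) hab
    simpa using this
  obtain ⟨u, hu⟩ := exists_unit_quadraticAlgebra hab
  obtain ⟨y, hy⟩ := exists_unit_quadraticAlgebra habB
  let x := Units.map (algebraMap B (QuadraticAlgebra B 0 ((a : B) - 1))).toMonoidHom u
  have hx : (x : QuadraticAlgebra B 0 ((a : B) - 1)) = ⟨⟨1, 1⟩, 0⟩ := by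
    simp [x, hu, QuadraticAlgebra.algebraMap_eq]
  refine ⟨QuadraticAlgebra B 0 ((a : B) - 1), inferInstance, x, y, ?_, ?_, ?_, ?_⟩
  · ext <;> simp [B]
  · rw [hx]
    ext <;> simp [B, QuadraticAlgebra.re_one, QuadraticAlgebra.im_one]
  · rw [hy]
    ext <;> simp [B, QuadraticAlgebra.re_one, QuadraticAlgebra.im_one]
  · intro r s t w h
    rw [hx, hy] at h
    have h1 := congrArg (fun z => z.re.im) h
    have h2 := congrArg (fun z => z.im.re) h
    have h3 := congrArg (fun z => z.im.im) h
    simp [B, QuadraticAlgebra.re_one, QuadraticAlgebra.im_one] at h1 h2 h3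
    exact ⟨h1, h2, h3⟩

/-- The homomorphism from `ZMod n` sending `1` to an element killed by `n`. -/
noncomputable def zmodHom {C : Type*} [CommRing C] (n : ℕ) (z : C) (h : (n : C) * z = 0) :
    ZMod n →+ C :=
  ZMod.lift n ⟨zmultiplesHom C z, by simpa using h⟩

theorem zmodHom_intCast {C : Type*} [CommRing C] (n : ℕ) (z : C) (h : (n : C) * z = 0) (c : ℤ) :
    zmodHom n z h c = c * z := by
  simp [zmodHom]

/-- The electric anyon group of the Delfino–Chamon–You model
`BB_N((X-a)(X-1), (Y-a)(Y-1))` is `ZMod N × (ZMod N_a)³`. -/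
theorem stmt12 (N : ℕ) (hN : 0 < N) (a : ℤ) (Na : ℕ)
    (hNa_dvd : Na ∣ N) (hNa_cop : IsCoprime (Na : ℤ) a)
    (hNa_max : ∀ d : ℕ, d ∣ N → IsCoprime ((d : ℤ)) a → d ≤ Na) :
    Nonempty ((RR N ⧸ Ideal.span
        {(Xv N - (a : RR N)) * (Xv N - 1), (Yv N - (a : RR N)) * (Yv N - 1)}) ≃+
      (ZMod N × ZMod Na × ZMod Na × ZMod Na)) := by
  set I := Ideal.span {(Xv N - (a : RR N)) * (Xv N - 1), (Yv N - (a : RR N)) * (Yv N - 1)} with hI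
  let q : RR N →+* RR N ⧸ I := Ideal.Quotient.mk I
  obtain ⟨k, hk⟩ := exists_dvd_mul_pow_of_maximal_coprime_divisor hN hNa_dvd hNa_cop hNa_max
  have hX : (q (Xv N) - a) * (q (Xv N) - 1) = 0 := by
    have : q ((Xv N - (a : RR N)) * (Xv N - 1)) = 0 :=
      Ideal.Quotient.eq_zero_iff_mem.2 (Ideal.subset_span (by simp))
    simpa only [map_mul, map_sub, map_intCast, map_one] using this
  have hY : (q (Yv N) - a) * (q (Yv N) - 1) = 0 := by
    have : q ((Yv N - (a : RR N)) * (Yv N - 1)) = 0 :=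
      Ideal.Quotient.eq_zero_iff_mem.2 (Ideal.subset_span (by simp))
    simpa only [map_mul, map_sub, map_intCast, map_one] using this
  have hNR : (N : RR N) = 0 := by
    have := congrArg (algebraMap (ZMod N) (RR N)) (ZMod.natCast_self N)
    simpa only [map_natCast, map_zero] using this
  have hNq : (N : RR N ⧸ I) = 0 := by rw [← map_natCast q, hNR, map_zero]
  have hmX : (Na : RR N ⧸ I) * (q (Xv N) - 1) = 0 :=
    natCast_mul_sub_one_eq_zero (x := Units.map (q : RR N →* RR N ⧸ I) (unitX N)) hX hNq hk
  have hmY : (Na : RR N ⧸ I) * (q (Yv N) - 1) = 0 :=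
    natCast_mul_sub_one_eq_zero (x := Units.map (q : RR N →* RR N ⧸ I) (unitY N)) hY hNq hk
  have hmXY : (Na : RR N ⧸ I) * ((q (Xv N) - 1) * (q (Yv N) - 1)) = 0 := by
    rw [← mul_assoc, hmX, zero_mul]
  let ψ : ZMod N × ZMod Na × ZMod Na × ZMod Na →+ RR N ⧸ I :=
    (zmodHom N 1 (by rw [hNq, zero_mul])).coprod <| (zmodHom Na _ hmX).coprod <|
      (zmodHom Na _ hmY).coprod (zmodHom Na _ hmXY)
  have hψ : ∀ r s t w : ℤ, ψ (r, s, t, w) = r + s * (q (Xv N) - 1) + t * (q (Yv N) - 1) +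
      w * ((q (Xv N) - 1) * (q (Yv N) - 1)) := by
    intro r s t w
    simp only [ψ, AddMonoidHom.coprod_apply, zmodHom_intCast]
    ring
  have hlift : ∀ (C : Type) [CommRing C] (x y : Cˣ), (N : C) = 0 →
      ((x : C) - a) * (x - 1) = 0 → ((y : C) - a) * (y - 1) = 0 →
      ∃ g : RR N ⧸ I →+* C, g (q (Xv N)) = x ∧ g (q (Yv N)) = y := by
    intro C _ x y hC hx hy
    obtain ⟨f, hfx, hfy⟩ := exists_ringHom_eval hC x y
    have hle : I ≤ RingHom.ker f := by
      rw [hI, Ideal.span_le]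
      rintro z (rfl | rfl)
      · simpa [RingHom.mem_ker, hfx] using hx
      · simpa [RingHom.mem_ker, hfy] using hy
    exact ⟨Ideal.Quotient.lift I f fun z hz => hle hz, hfx, hfy⟩
  refine ⟨(AddEquiv.ofBijective ψ ⟨?_, ?_⟩).symm⟩
  · rw [injective_iff_map_eq_zero]
    rintro ⟨r, s, t, w⟩ h
    obtain ⟨r, rfl⟩ := ZMod.intCast_surjective r
    obtain ⟨s, rfl⟩ := ZMod.intCast_surjective s
    obtain ⟨t, rfl⟩ := ZMod.intCast_surjective t
    obtain ⟨w, rfl⟩ := ZMod.intCast_surjective w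
    rw [hψ] at h
    have hr : (r : ZMod N) = 0 := by
      obtain ⟨g, hgx, hgy⟩ := hlift (ZMod N) 1 1 (ZMod.natCast_self N) (by simp) (by simp)
      simpa [hgx, hgy] using congrArg g h
    obtain ⟨C, _, x, y, hC, hx, hy, hind⟩ := exists_units_independent hNa_cop
    have hNC : (N : C) = 0 := by
      obtain ⟨d, rfl⟩ := hNa_dvd
      rw [Nat.cast_mul, hC, zero_mul]
    obtain ⟨g, hgx, hgy⟩ := hlift C x y hNC hx hy
    obtain ⟨hs, ht, hw⟩ := hind r s t w (by simpa [hgx, hgy] using congrArg g h)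
    rw [hr, hs, ht, hw]
    rfl
  · intro z
    obtain ⟨p, rfl⟩ := Ideal.Quotient.mk_surjective z
    obtain ⟨r, s, t, w, h⟩ := exists_eq_intCast_combination q hX hY hmX hmY hNa_cop p
    exact ⟨(r, s, t, w), (hψ r s t w).trans h.symm⟩
end

section
/- Let M be a positive integer and a an integer coprime to M, and let d be the least positive integer such that M divides a^d − 1 (the multiplicative order of a modulo M). Then the least positive integer α such that M divides G_α = ∑_{m=0}^{α−1} a^m is d · (M / gcd(G_d, M)). -/
/-- If `M ∣ a ^ d - 1`, then `G_{dk} ≡ k G_d` modulo `M`. -/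
theorem geomSum_mul_modEq {M a : ℤ} {d : ℕ} (h : M ∣ a ^ d - 1) (k : ℕ) :
    ∑ m ∈ Finset.range (d * k), a ^ m ≡ k * ∑ m ∈ Finset.range d, a ^ m [ZMOD M] := by
  have h1 : a ^ d ≡ 1 [ZMOD M] := (Int.modEq_iff_dvd.2 h).symm
  induction k with
  | zero => simp
  | succ k ih =>
    have h2 : a ^ (d * k) ≡ 1 [ZMOD M] := by simpa [pow_mul] using h1.pow k
    rw [Nat.mul_succ, Finset.sum_range_add]
    simp only [pow_add, ← Finset.mul_sum]
    push_cast
    rw [add_mul]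
    exact ih.add (h2.mul_right _)

/-- `M` divides `k * G` exactly when `M / gcd(G, M)` divides `k`. -/
theorem dvd_natCast_mul_iff_div_gcd_dvd {M : ℕ} (hM : 0 < M) (G : ℤ) (k : ℕ) :
    (M : ℤ) ∣ k * G ↔ M / Int.gcd G M ∣ k := by
  have hg : 0 < Nat.gcd G.natAbs M := Nat.gcd_pos_of_pos_right _ hM
  rw [Int.natCast_dvd, Int.natAbs_mul, Int.natAbs_natCast, Int.gcd_def, Int.natAbs_natCast]
  constructor
  · intro h
    have hcop : Nat.Coprime (M / Nat.gcd G.natAbs M) (G.natAbs / Nat.gcd G.natAbs M) :=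
      (Nat.coprime_div_gcd_div_gcd hg).symm
    refine hcop.dvd_of_dvd_mul_right ?_
    rw [← Nat.mul_div_assoc _ (Nat.gcd_dvd_left _ _)]
    exact Nat.div_dvd_div (Nat.gcd_dvd_right _ _) h
  · intro h
    calc M = M / Nat.gcd G.natAbs M * Nat.gcd G.natAbs M :=
          (Nat.div_mul_cancel (Nat.gcd_dvd_right _ _)).symm
      _ ∣ k * G.natAbs := mul_dvd_mul h (Nat.gcd_dvd_left _ _)

/-- The least positive exponent `d` with `M ∣ a ^ d - 1` divides every such exponent. -/
theorem dvd_of_dvd_pow_sub_one {M a : ℤ} {d : ℕ} (hd_pos : 0 < d) (hd_dvd : M ∣ a ^ d - 1)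
    (hd_min : ∀ e : ℕ, 0 < e → M ∣ a ^ e - 1 → d ≤ e) {n : ℕ} (hn : M ∣ a ^ n - 1) : d ∣ n := by
  have h1 : a ^ d ≡ 1 [ZMOD M] := (Int.modEq_iff_dvd.2 hd_dvd).symm
  have h2 : a ^ n ≡ a ^ (n % d) [ZMOD M] := by
    have := (h1.pow (n / d)).mul_right (a ^ (n % d))
    rwa [← pow_mul, ← pow_add, Nat.div_add_mod, one_pow, one_mul] at this
  have h3 : M ∣ a ^ (n % d) - 1 := ((Int.modEq_iff_dvd.2 hn).trans h2).dvd
  by_contra hnd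
  have hpos : 0 < n % d := Nat.pos_of_ne_zero fun h => hnd (Nat.dvd_of_mod_eq_zero h)
  exact absurd (hd_min _ hpos h3) (Nat.mod_lt n hd_pos).not_ge

/-- If `d` is the multiplicative order of `a` modulo `M`, then the least positive `α` with
`M ∣ G_α = ∑_{m<α} a^m` is `d · (M / gcd(G_d, M))`. -/
theorem stmt14 (M : ℕ) (hM : 0 < M) (a : ℤ) (ha : IsCoprime a (M : ℤ))
    (d : ℕ) (hd_pos : 0 < d) (hd_dvd : (M : ℤ) ∣ a ^ d - 1)
    (hd_min : ∀ e : ℕ, 0 < e → (M : ℤ) ∣ a ^ e - 1 → d ≤ e) :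
    IsLeast {α : ℕ | 0 < α ∧ (M : ℤ) ∣ ∑ m ∈ Finset.range α, a ^ m}
      (d * (M / Int.gcd (∑ m ∈ Finset.range d, a ^ m) (M : ℤ))) := by
  have key (k : ℕ) : (M : ℤ) ∣ ∑ m ∈ Finset.range (d * k), a ^ m ↔
      M / Int.gcd (∑ m ∈ Finset.range d, a ^ m) (M : ℤ) ∣ k := by
    rw [← dvd_natCast_mul_iff_div_gcd_dvd hM]
    exact (geomSum_mul_modEq hd_dvd k).dvd_iff
  refine ⟨⟨Nat.mul_pos hd_pos (Nat.div_pos ?_ ?_), (key _).2 dvd_rfl⟩, ?_⟩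
  · exact Nat.le_of_dvd hM (Nat.gcd_dvd_right _ _)
  · exact Nat.gcd_pos_of_pos_right _ hM
  · rintro α ⟨hα, hdvd⟩
    have hpow : (M : ℤ) ∣ a ^ α - 1 := by
      rw [← geom_sum_mul]
      exact hdvd.mul_right _
    obtain ⟨k, rfl⟩ := dvd_of_dvd_pow_sub_one hd_pos hd_dvd hd_min hpow
    exact Nat.mul_le_mul_left d (Nat.le_of_dvd (Nat.pos_of_mul_pos_left hα) ((key k).1 hdvd))
end
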